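/- Let G be a connected chordal graph with a minimal rooted tree representation T. Let X be a subtree of T rooted at x, let z ∈ V(X), and let Q be the x–z path in X. Let 𝒫 be a family of longest paths of G such that X has the core capture property for 𝒫. Then there is a set A ⊆ V(G) with |A| ≤ 4 · ccg(X, x) + 5 such that the family 𝒫′ of paths in 𝒫 that are disjoint from A is either empty, or there is a component X′ of X − V(Q) such that X′ has the core capture property for 𝒫′. -/

import Mathlib

open SimpleGraph

/-- A graph is chordal if every cycle on at least 4 vertices has a chord
(an edge of the graph joining two vertices of the cycle that is not an edge of the cycle). -/
def IsChordal {V : Type} (G : SimpleGraph V) : Prop :=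
  ∀ (v : V) (c : G.Walk v v), c.IsCycle → 4 ≤ c.length →
    ∃ a b : V, a ∈ c.support ∧ b ∈ c.support ∧ G.Adj a b ∧ s(a, b) ∉ c.edges

/-- A tree representation of `G` with host tree `T`: each vertex `u` of `G` gets a
nonempty subtree `S u` of `T`, and distinct vertices are adjacent iff their subtrees meet. -/
structure TreeRep {V W : Type} (G : SimpleGraph V) (T : SimpleGraph W) : Type where
  isTree : T.IsTree
  S : V → Set W
  subtree_connected : ∀ u : V, (T.induce (S u)).Connected
  adj_iff : ∀ u v : V, u ≠ v → (G.Adj u v ↔ (S u ∩ S v).Nonempty)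

/-- A tree representation is minimal if no tree representation of `G` has a host tree
with fewer vertices. -/
def TreeRep.IsMinimal {V W : Type} [Fintype W] {G : SimpleGraph V} {T : SimpleGraph W}
    (_R : TreeRep G T) : Prop :=
  ∀ (W' : Type) [Fintype W'] (T' : SimpleGraph W'),
    Nonempty (TreeRep G T') → Fintype.card W ≤ Fintype.card W'

/-- The bag of a host tree vertex `x`. -/
def TreeRep.bag {V W : Type} {G : SimpleGraph V} {T : SimpleGraph W}
    (R : TreeRep G T) (x : W) : Set V :=
  {u : V | x ∈ R.S u}

/-- In `T` rooted at `r`, the (vertex set of the) subtree rooted at `x`: all vertices `w`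
such that the `r`–`w` path contains `x`. -/
def rootedSubtree {W : Type} (T : SimpleGraph W) (r x : W) : Set W :=
  {w : W | ∀ p : T.Walk r w, p.IsPath → x ∈ p.support}

/-- The core of a subgraph `H` of `G`: the union over edges `uv` of `H` of `V(S u ∩ S v)`,
a set of host-tree vertices. -/
def TreeRep.core {V W : Type} {G : SimpleGraph V} {T : SimpleGraph W}
    (R : TreeRep G T) (H : G.Subgraph) : Set W :=
  {t : W | ∃ u v : V, H.Adj u v ∧ t ∈ R.S u ∧ t ∈ R.S v}

/-- `C` is a connected component of the subgraph of `T` induced on the vertex set `s`. -/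
def IsCompOf {W : Type} (T : SimpleGraph W) (s C : Set W) : Prop :=
  C.Nonempty ∧ C ⊆ s ∧ (T.induce C).Connected ∧
    ∀ ⦃a b : W⦄, a ∈ C → b ∈ s → T.Adj a b → b ∈ C

/-- A graph is 2-connected if it has more than 2 vertices and deleting any one vertex
leaves it connected. -/
def TwoConnected {V : Type} (G : SimpleGraph V) : Prop :=
  2 < Nat.card V ∧ ∀ v : V, (G.induce {v}ᶜ).Connected

/-- `G` is `k`-connected: more than `k` vertices, and deleting fewer than `k` vertices
leaves it connected. -/
def IsKConnectedGraph {V : Type} (G : SimpleGraph V) (k : ℕ) : Prop :=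
  k < Nat.card V ∧ ∀ s : Set V, s.Finite → s.ncard < k → (G.induce sᶜ).Connected

/-- The vertex connectivity `κ(G)`: the maximum `k` such that `G` is `k`-connected. -/
noncomputable def vertexConnectivity {V : Type} (G : SimpleGraph V) : ℕ :=
  sSup {k : ℕ | IsKConnectedGraph G k}

/-- `p` is a path of maximum length in `G`. -/
def IsLongestPath {V : Type} (G : SimpleGraph V) {a b : V} (p : G.Walk a b) : Prop :=
  p.IsPath ∧ ∀ (c d : V) (q : G.Walk c d), q.IsPath → q.length ≤ p.length

/-- `c` is a cycle of maximum length in `G`. -/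
def IsLongestCycle {V : Type} (G : SimpleGraph V) {a : V} (c : G.Walk a a) : Prop :=
  c.IsCycle ∧ ∀ (d : V) (q : G.Walk d d), q.IsCycle → q.length ≤ c.length

/-- The longest path transversal number of `G`: the least size of a set of vertices
meeting every longest path. -/
noncomputable def lpt {V : Type} (G : SimpleGraph V) : ℕ :=
  sInf {k : ℕ | ∃ A : Set V, A.Finite ∧ A.ncard = k ∧
    ∀ (a b : V) (p : G.Walk a b), IsLongestPath G p → ∃ v ∈ A, v ∈ p.support}

/-- The longest cycle transversal number of `G`: the least size of a set of vertices
meeting every longest cycle. -/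
noncomputable def lct {V : Type} (G : SimpleGraph V) : ℕ :=
  sInf {k : ℕ | ∃ A : Set V, A.Finite ∧ A.ncard = k ∧
    ∀ (a : V) (c : G.Walk a a), IsLongestCycle G c → ∃ v ∈ A, v ∈ c.support}

/-- `DQX T q X Q0`: the union, over `y ∈ Q0`, of the component of `X − E(Q)` containing
`y` (all vertices joined to some `y ∈ Q0` by a walk inside `X` avoiding the edges of `q`). -/
def DQX {W : Type} (T : SimpleGraph W) {x z : W} (q : T.Walk x z) (X : Set W)
    (Q0 : Set W) : Set W :=
  {w : W | ∃ y ∈ Q0, ∃ d : (T.deleteEdges {e : Sym2 W | e ∈ q.edges}).Walk y w,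
    ∀ a ∈ d.support, a ∈ X}

/-- Cutter can force the Cutter–Chooser game from position `(X, x)` (a subtree `X` of the
host tree, rooted at `x`) to end within `t` rounds: Cutter picks `z ∈ X` and cuts along the
`x`–`z` path `Q` in `X`; either `X = Q` (game over), or for every component `X'` of
`X − V(Q)` (with its root `x'`, the vertex of `X'` adjacent to `Q`) that Chooser may pick,
Cutter wins within `t - 1` further rounds. -/
def cutterWins {W : Type} (T : SimpleGraph W) : ℕ → Set W → W → Prop
  | 0, _, _ => False
  | t + 1, X, x =>
      ∃ z ∈ X, ∃ p : T.Walk x z, p.IsPath ∧ (∀ w ∈ p.support, w ∈ X) ∧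
        (X = {w : W | w ∈ p.support} ∨
          ∀ (X' : Set W) (x' : W), IsCompOf T (X \ {w : W | w ∈ p.support}) X' →
            x' ∈ X' → (∃ u ∈ p.support, T.Adj u x') → cutterWins T t X' x')

/-- `ccg(X, x)`: the number of rounds of the Cutter–Chooser game on the subtree `X` of the
host tree rooted at `x`, under optimal play. -/
noncomputable def ccgOn {W : Type} (T : SimpleGraph W) (X : Set W) (x : W) : ℕ :=
  sInf {t : ℕ | cutterWins T t X x}

/-- `ccg(T)`: the minimum over roots `r` of `ccg(T, r)`. -/
noncomputable def ccg {W : Type} (T : SimpleGraph W) : ℕ :=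
  sInf (Set.range fun r : W => ccgOn T Set.univ r)

/-- A subdivided caterpillar: a tree having a (spine) path containing every vertex of
degree at least 3. -/
def IsSubdividedCaterpillar {W : Type} (T : SimpleGraph W) : Prop :=
  T.IsTree ∧ ∃ (a b : W) (q : T.Walk a b), q.IsPath ∧
    ∀ v : W, 3 ≤ (T.neighborSet v).ncard → v ∈ q.support

/-- A subdivided star: a tree with at most one vertex of degree at least 3. -/
def IsSubdividedStar {W : Type} (T : SimpleGraph W) : Prop :=
  T.IsTree ∧ ∀ v w : W, 3 ≤ (T.neighborSet v).ncard → 3 ≤ (T.neighborSet w).ncard → v = w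

/-- A leaf: a vertex of degree 1. -/
def IsLeaf {W : Type} (T : SimpleGraph W) (v : W) : Prop := (T.neighborSet v).ncard = 1

/-- `mf T`: the maximum over edges `e` of `T` of the minimum number of leaves of `T`
contained in a component of `T − e`. -/
noncomputable def mf {W : Type} (T : SimpleGraph W) : ℕ :=
  sSup {k : ℕ | ∃ u v : W, T.Adj u v ∧
    k = min {w : W | IsLeaf T w ∧ (T.deleteEdges {s(u, v)}).Reachable u w}.ncard
            {w : W | IsLeaf T w ∧ (T.deleteEdges {s(u, v)}).Reachable v w}.ncard}

/-- In `T` rooted at `r`, `v` is a child of `u`. -/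
def IsChildIn {W : Type} (T : SimpleGraph W) (r u v : W) : Prop :=
  T.Adj u v ∧ ∀ p : T.Walk r v, p.IsPath → u ∈ p.support

/-- In `T` rooted at `r`, `u` is childless. -/
def IsChildlessIn {W : Type} (T : SimpleGraph W) (r u : W) : Prop :=
  ¬ ∃ v : W, IsChildIn T r u v

/-!
Order the host tree away from its root, so that subtrees become branches `Ici b`, the path `Q`
becomes `Icc x z`, and the components of `X - V(Q)` are the branches of `offBranches x z`.

Fix a point `y` of `Q`, as large as possible, such that all paths of the family avoiding a single
vertex capture the branch at `y`. The bag of `y` is a clique, and a longest path ending in a clique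
shows that deleting one vertex leaves only longest paths that all meet the same part of `G` outside
the bag. If that part lies in a branch above `y`, then by maximality of `y` this branch hangs
off `Q` and we are done. Otherwise every remaining path leaves the branch at `y`.

For paths that leave the branch at `x`, choose two vertices `c` and `c'` of the bag of `x` whose
subtrees follow `Q` together as far as possible, up to `m`. A path avoiding `c` has no core on the
segment from `x` to `m`, so it runs through branches hanging off that segment. Among all such runs
that enter and leave a branch, take a longest one, in the branch at `b`, say. A path avoiding `c`,
`c'` and the two ends of this run has to meet the branch at `b`: otherwise its own run could be
replaced by this longer one, extended by `c` and `c'`. So four vertices suffice when both ends of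
the path lie outside, and following an optimal strategy of Cutter destroys all these paths with
`4 * ccg` vertices. For paths that start or end inside the branch at `x` the same exchange applies
to their initial runs and costs two vertices more.
-/

section Lists

open scoped List

variable {V : Type*} {G : SimpleGraph V} {l p q s : List V} {I : Set V}

/-- A path of `G`, given as the list of its vertices; the empty list counts as a path. -/
def IsPathList (G : SimpleGraph V) (l : List V) : Prop := l.IsChain G.Adj ∧ l.Nodup

/-- A path of maximum length of `G`, given as the list of its vertices. -/
def IsLongestPathList (G : SimpleGraph V) (l : List V) : Prop :=
  IsPathList G l ∧ ∀ l', IsPathList G l' → l'.length ≤ l.length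

lemma IsPathList.of_isInfix (hl : IsPathList G l) (h : p <:+: l) : IsPathList G p := by
  refine ⟨?_, hl.2.sublist h.sublist⟩
  obtain ⟨s, t, rfl⟩ := h
  exact hl.1.left_of_append.right_of_append

lemma IsPathList.adj {a b : V} (hl : IsPathList G l) (h : [a, b] <:+: l) : G.Adj a b := by
  simpa using (hl.of_isInfix h).1

lemma IsPathList.reverse (hl : IsPathList G l) : IsPathList G l.reverse :=
  ⟨List.isChain_reverse.2 (hl.1.imp fun _ _ h => h.symm), List.nodup_reverse.2 hl.2⟩

lemma IsPathList.append (hp : IsPathList G p) (hq : IsPathList G q)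
    (hadj : ∀ a ∈ p.getLast?, ∀ b ∈ q.head?, G.Adj a b) (hd : p.Disjoint q) :
    IsPathList G (p ++ q) :=
  ⟨List.isChain_append.2 ⟨hp.1, hq.1, hadj⟩, List.nodup_append'.2 ⟨hp.2, hq.2, hd⟩⟩

lemma IsPathList.append_cons {k : V} (hp : IsPathList G (p ++ [k])) (hq : IsPathList G (k :: q))
    (hd : p.Disjoint q) : IsPathList G (p ++ k :: q) :=
  ⟨List.isChain_split.2 ⟨hp.1, hq.1⟩, by have := hp.2; have := hq.2; grind [List.Disjoint]⟩

lemma IsPathList.exists_suffix_head?_eq {K : Set V} {a c : V} (hK : G.IsClique K) (ha : a ∈ K)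
    (hc : c ∈ K) (hp : IsPathList G (a :: p)) (hcp : c ∉ p) :
    ∃ q, IsPathList G q ∧ a :: p <:+ q ∧ q.head? = some c ∧ ∀ w ∈ q, w = c ∨ w ∈ a :: p := by
  rcases eq_or_ne c a with rfl | hca
  · exact ⟨c :: p, hp, List.suffix_rfl, rfl, fun _ => Or.inr⟩
  · refine ⟨c :: a :: p, ?_, List.suffix_cons _ _, rfl, fun _ => List.mem_cons.1⟩
    exact IsPathList.append (p := [c]) (by simp [IsPathList]) hp
      (by simpa using hK hc ha hca) (by simp [hca, hcp])

lemma IsPathList.exists_suffix_ends {K : Set V} {a a' c c' : V} {N : List V} (hK : G.IsClique K)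
    (ha : a ∈ K) (ha' : a' ∈ K) (hc : c ∈ K) (hc' : c' ∈ K) (hcc' : c ≠ c')
    (hN : IsPathList G (a :: (N ++ [a']))) (hcN : c ∉ N) (hcN' : c' ∉ N) :
    ∃ q, IsPathList G q ∧ N.length + 2 ≤ q.length ∧ (∀ e ∈ q.head?, e = c ∨ e = c') ∧
      (∀ e ∈ q.getLast?, e = c ∨ e = c') ∧ ∀ w ∈ q, w = c ∨ w = c' ∨ w ∈ a :: (N ++ [a']) := by
  wlog hswap : a ≠ c' ∧ a' ≠ c generalizing c c'
  · have haa' : a ≠ a' := by rintro rfl; simpa using hN.2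
    obtain ⟨q, hq, hlen, hhead, hlast, hmem⟩ :=
      this hc' hc hcc'.symm hcN' hcN (by grind)
    exact ⟨q, hq, hlen, fun e he => (hhead e he).symm, fun e he => (hlast e he).symm, by grind⟩
  obtain ⟨hac', ha'c⟩ := hswap
  obtain ⟨q₁, hq₁, ⟨r, rfl⟩, hhead₁, hmem₁⟩ :=
    IsPathList.exists_suffix_head?_eq hK ha hc hN (by simp [hcN, ha'c.symm])
  have hc'r : c' ∉ N.reverse ++ a :: r.reverse := by
    have := hq₁.2
    grind
  obtain ⟨q₂, hq₂, ⟨r', rfl⟩, hhead₂, hmem₂⟩ := IsPathList.exists_suffix_head?_eq hK ha' hc'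
    (by simpa using hq₁.reverse) hc'r
  refine ⟨_, hq₂, by simp; omega, by simp [hhead₂], ?_, by grind⟩
  have : (r' ++ (r ++ a :: (N ++ [a'])).reverse).getLast? = some c := by
    rw [List.getLast?_append, List.getLast?_reverse, hhead₁, Option.some_or]
  simp_all

lemma IsLongestPathList.reverse (hl : IsLongestPathList G l) : IsLongestPathList G l.reverse :=
  ⟨hl.1.reverse, by simpa using hl.2⟩

lemma IsLongestPathList.ne_nil [Nonempty V] (hl : IsLongestPathList G l) : l ≠ [] := by
  rintro rfl
  simpa using hl.2 [Classical.arbitrary V] (by simp [IsPathList])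

lemma IsLongestPathList.length_le_of_isInfix {u u' : V} (hl : IsLongestPathList G l)
    (h : u :: (s ++ [u']) <:+: l) (hq : IsPathList G q) (hd : ∀ w ∈ q, w ∉ l)
    (hu : ∀ e ∈ q.head?, G.Adj u e) (hu' : ∀ e ∈ q.getLast?, G.Adj e u') :
    q.length ≤ s.length := by
  obtain ⟨p, p', rfl⟩ := h
  rcases eq_or_ne q [] with rfl | hq0
  · simp
  have hstart : IsPathList G (p ++ [u]) := hl.1.of_isInfix ⟨[], s ++ [u'] ++ p', by simp⟩
  have hend : IsPathList G (u' :: p') := hl.1.of_isInfix ⟨p ++ u :: s, [], by simp⟩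
  have hnodup := hl.1.2
  have hnew : IsPathList G ((p ++ [u]) ++ q ++ u' :: p') := by
    refine (hstart.append hq (by simpa using hu) fun w hw hwq => hd w hwq (by grind)).append hend
      ?_ (by grind [List.Disjoint])
    rw [List.getLast?_append_of_ne_nil _ hq0]
    simpa using hu'
  have := hl.2 _ hnew
  simp only [List.length_append, List.length_cons, List.length_nil] at this
  omega

lemma IsLongestPathList.length_le_of_isPrefix {u : V} (hl : IsLongestPathList G l)
    (h : s ++ [u] <+: l) (hq : IsPathList G q) (hd : ∀ w ∈ q, w ∉ l)
    (hu : ∀ e ∈ q.getLast?, G.Adj e u) : q.length ≤ s.length := by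
  obtain ⟨p, rfl⟩ := h
  have hend : IsPathList G (u :: p) := hl.1.of_isInfix ⟨s, [], by simp⟩
  have := hl.2 _ (hq.append hend (by simpa using hu) fun w hw hwp => hd w hw (by grind))
  simp only [List.length_append, List.length_cons, List.length_nil] at this
  omega

lemma exists_max_length_of_nodup [Finite V] {P : List V → Prop} (hP : ∀ l, P l → l.Nodup)
    (h : ∃ l, P l) : ∃ l, P l ∧ ∀ l', P l' → l'.length ≤ l.length := by
  have := Fintype.ofFinite V
  have hfin : {l | P l}.Finite := (List.finite_length_le V (Fintype.card V)).subset
    fun l hl => (hP l hl).length_le_card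
  exact Set.exists_max_image _ List.length hfin h

lemma exists_eq_append_cons_of_mem {v : V} (hv : v ∈ l) (hvI : v ∈ I) :
    ∃ p u q, l = p ++ u :: q ∧ u ∈ I ∧ ∀ w ∈ p, w ∉ I := by
  classical
  obtain ⟨u, hu⟩ := Option.isSome_iff_exists.1
    (List.find?_isSome (p := (decide <| · ∈ I)) |>.2 ⟨v, hv, by simpa⟩)
  obtain ⟨huI, p, q, hl, hp⟩ := List.find?_eq_some_iff_append.1 hu
  exact ⟨p, u, q, hl, by simpa using huI, by simpa using hp⟩

lemma exists_eq_append_cons_of_mem_last {v : V} (hv : v ∈ l) (hvI : v ∈ I) :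
    ∃ p u q, l = p ++ u :: q ∧ u ∈ I ∧ ∀ w ∈ q, w ∉ I := by
  obtain ⟨p, u, q, hl, hu, hp⟩ := exists_eq_append_cons_of_mem (List.mem_reverse.2 hv) hvI
  exact ⟨q.reverse, u, p.reverse, by simpa using congrArg List.reverse hl, hu, by simpa using hp⟩

/-- The vertices `u` and `v` occur next to each other in `l`, in either order. -/
def AreConsecutive (l : List V) (u v : V) : Prop := [u, v] <:+: l ∨ [v, u] <:+: l

lemma AreConsecutive.symm {u v : V} (h : AreConsecutive l u v) : AreConsecutive l v u := Or.symm h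

lemma AreConsecutive.mem_left {u v : V} (h : AreConsecutive l u v) : u ∈ l := by
  rcases h with h | h <;> exact h.subset (by simp)

lemma AreConsecutive.mem_right {u v : V} (h : AreConsecutive l u v) : v ∈ l := h.symm.mem_left

lemma AreConsecutive.of_reverse {u v : V} (h : AreConsecutive l.reverse u v) :
    AreConsecutive l u v :=
  h.symm.imp (by simpa using List.IsInfix.reverse ·) (by simpa using List.IsInfix.reverse ·)

lemma IsPathList.adj_of_areConsecutive {u v : V} (hl : IsPathList G l)
    (h : AreConsecutive l u v) : G.Adj u v :=
  h.elim hl.adj fun h => (hl.adj h).symm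

lemma exists_areConsecutive_of_mem {v : V} (hv : v ∈ l) (hlen : 2 ≤ l.length) :
    ∃ w, AreConsecutive l v w := by
  obtain ⟨p, q, rfl⟩ := List.append_of_mem hv
  rcases q with _ | ⟨w, q⟩
  · rcases List.eq_nil_or_concat p with rfl | ⟨p, w, rfl⟩
    · simp at hlen
    · exact ⟨w, Or.inr ⟨p, [], by simp⟩⟩
  · exact ⟨w, Or.inl ⟨p, q, by simp⟩⟩

lemma exists_areConsecutive_notMem_mem {Q : Set V} {e m : V} (he : e ∈ l) (hm : m ∈ l)
    (heQ : e ∉ Q) (hmQ : m ∈ Q) :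
    ∃ p u, AreConsecutive l p u ∧ p ∉ Q ∧ u ∈ Q ∧ (p = e ∨ [e, p, u] <+ l ∨ [u, p, e] <+ l) := by
  have forward (l₁ l₂ : List V) (hm : m ∈ l₂) : ∃ p u, [p, u] <:+: l₁ ++ e :: l₂ ∧ p ∉ Q ∧ u ∈ Q ∧
      (p = e ∨ [e, p, u] <+ l₁ ++ e :: l₂) := by
    obtain ⟨s, u, t, rfl, hu, hs⟩ := exists_eq_append_cons_of_mem hm hmQ
    rcases List.eq_nil_or_concat s with rfl | ⟨s, p, rfl⟩
    · exact ⟨e, u, ⟨l₁, t, by simp⟩, heQ, hu, Or.inl rfl⟩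
    · refine ⟨p, u, ⟨l₁ ++ e :: s, t, by simp⟩, hs p (by simp), hu, Or.inr ?_⟩
      exact List.sublist_append_of_sublist_right (by simp)
  obtain ⟨l₁, l₂, rfl⟩ := List.append_of_mem he
  rcases List.mem_append.1 hm with hm | hm
  · obtain ⟨p, u, hpu, hp, hu, h⟩ := forward l₂.reverse l₁.reverse (by simpa using hm)
    refine ⟨p, u, AreConsecutive.of_reverse (Or.inl (by simpa using hpu)), hp, hu, ?_⟩
    exact h.imp_right fun h => Or.inr (by simpa using h.reverse)
  · have hml : m ∈ l₂ := (List.mem_cons.1 hm).resolve_left fun h => heQ (h ▸ hmQ)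
    obtain ⟨p, u, hpu, hp, hu, h⟩ := forward l₁ l₂ hml
    exact ⟨p, u, Or.inl hpu, hp, hu, h.imp_right Or.inl⟩

/-- The list `l` enters `I` from outside `I` and later leaves it. -/
def HasInnerRun (I : Set V) (l : List V) : Prop :=
  ∃ u s u', u :: (s ++ [u']) <:+: l ∧ s ≠ [] ∧ (∀ w ∈ s, w ∈ I) ∧ u ∉ I ∧ u' ∉ I

/-- The list `l` starts in `I` and later leaves it. -/
def HasInitialRun (I : Set V) (l : List V) : Prop :=
  ∃ s u, s ++ [u] <+: l ∧ s ≠ [] ∧ (∀ w ∈ s, w ∈ I) ∧ u ∉ I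

lemma HasInnerRun.of_sublist {a v b : V} (h : [a, v, b] <+ l) (ha : a ∉ I) (hv : v ∈ I)
    (hb : b ∉ I) : HasInnerRun I l := by
  obtain ⟨l₁, l₂, rfl, hal, hvb⟩ := List.cons_sublist_iff.1 h
  obtain ⟨l₂, l₃, rfl, hvl, hbl⟩ := List.cons_sublist_iff.1 hvb
  obtain ⟨k, m, rfl⟩ := List.append_of_mem hvl
  obtain ⟨p, u, p', hp, hu, hp'⟩ :=
    exists_eq_append_cons_of_mem_last (l := l₁ ++ k) (I := Iᶜ) (List.mem_append_left _ hal) ha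
  obtain ⟨q, u', q', hq, hu', hq'⟩ := exists_eq_append_cons_of_mem (l := m ++ l₃) (I := Iᶜ)
    (List.mem_append_right _ (List.singleton_sublist.1 hbl)) hb
  refine ⟨u, p' ++ v :: q, u', ⟨p, q', ?_⟩, by simp, ?_, hu, hu'⟩
  · have : p ++ u :: p' ++ v :: (q ++ u' :: q') = l₁ ++ k ++ v :: (m ++ l₃) := by rw [hp, hq]
    simpa using this
  · simp only [Set.mem_compl_iff, not_not] at hp' hq'
    grind

lemma HasInnerRun.of_mem {v : V} (hv : v ∈ l) (hvI : v ∈ I) (hhead : ∀ w ∈ l.head?, w ∉ I)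
    (hlast : ∀ w ∈ l.getLast?, w ∉ I) : HasInnerRun I l := by
  obtain ⟨p, q, rfl⟩ := List.append_of_mem hv
  rcases p with _ | ⟨a, p⟩
  · exact absurd hvI (hhead v rfl)
  rcases List.eq_nil_or_concat q with rfl | ⟨q, b, rfl⟩
  · exact absurd hvI (hlast v (List.getLast?_eq_some_iff.2 ⟨a :: p, by simp⟩))
  refine HasInnerRun.of_sublist (a := a) (v := v) (b := b) ?_ (by simpa using hhead) hvI
    (hlast b (List.getLast?_eq_some_iff.2 ⟨a :: p ++ v :: q, by simp⟩))
  simp [List.sublist_append_of_sublist_right]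

lemma HasInnerRun.exists_mem (h : HasInnerRun I l) : ∃ v ∈ l, v ∈ I := by
  obtain ⟨u, s, u', hl, hs, hsI, -⟩ := h
  obtain ⟨w, hw⟩ := List.exists_mem_of_ne_nil s hs
  exact ⟨w, hl.subset (by simp [hw]), hsI w hw⟩

lemma HasInitialRun.of_head? {v e : V} (hv : l.head? = some v) (hvI : v ∈ I) (he : e ∈ l)
    (heI : e ∉ I) : HasInitialRun I l := by
  obtain ⟨s, u, t, rfl, hu, hs⟩ := exists_eq_append_cons_of_mem (I := Iᶜ) he heI
  refine ⟨s, u, ⟨t, by simp⟩, ?_, by simpa using hs, hu⟩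
  rintro rfl
  simp_all

end Lists

section CliqueLocalization

variable {V α : Type*} {G : SimpleGraph V} {K : Set V} {f : V → α} {l : List V}

/-- The lists of the family `F` that are disjoint from the set `A`. -/
def avoiding (F : Set (List V)) (A : Set V) : Set (List V) := {l ∈ F | ∀ v ∈ A, v ∉ l}

lemma avoiding_mono {F F' : Set (List V)} (h : F ⊆ F') (A : Set V) :
    avoiding F A ⊆ avoiding F' A :=
  fun _ hl => ⟨h hl.1, hl.2⟩

lemma avoiding_avoiding (F : Set (List V)) (A B : Set V) :
    avoiding (avoiding F A) B = avoiding F (A ∪ B) := by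
  ext l
  simp only [avoiding, Set.mem_ofPred_eq, Set.mem_union, or_imp, forall_and, and_assoc]

lemma IsPathList.apply_eq_apply (hf : ∀ ⦃u v⦄, G.Adj u v → u ∉ K → v ∉ K → f u = f v)
    (hl : IsPathList G l) (hlK : ∀ v ∈ l, v ∉ K) {u v : V} (hu : u ∈ l) (hv : v ∈ l) :
    f u = f v := by
  by_contra huv
  obtain ⟨p, w, hpw, hp, hw, -⟩ :=
    exists_areConsecutive_notMem_mem (Q := {w | f w = f v}) hu hv huv rfl
  exact hp ((hf (hl.adj_of_areConsecutive hpw) (hlK _ hpw.mem_left) (hlK _ hpw.mem_right)).trans hw)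

lemma isPathList_support {u v : V} {p : G.Walk u v} (hp : p.IsPath) : IsPathList G p.support :=
  ⟨p.isChain_adj_support, hp.support_nodup⟩

lemma exists_isPathList_of_disjoint (hG : G.Connected) (hl : l ≠ []) (hK : K.Nonempty)
    (hlK : ∀ v ∈ l, v ∉ K) :
    ∃ w ∈ l, ∃ s, ∃ k ∈ K, IsPathList G (w :: (s ++ [k])) ∧ ∀ v ∈ s, v ∉ K ∧ v ∉ l := by
  obtain ⟨v, hv⟩ := List.exists_mem_of_ne_nil l hl
  obtain ⟨k₀, hk₀⟩ := hK
  obtain ⟨p, hp⟩ := hG.exists_isPath v k₀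
  obtain ⟨p₁, w, t, hpt, hw, ht⟩ :=
    exists_eq_append_cons_of_mem_last (I := {v | v ∈ l}) p.start_mem_support hv
  have hk₀t : k₀ ∈ t := by
    have : (w :: t).getLast? = some k₀ := by
      have := List.getLast?_eq_some_getLast p.support_ne_nil
      rw [p.getLast_support, hpt] at this
      simpa using this
    exact (List.mem_cons.1 (List.mem_of_getLast? this)).resolve_left
      fun h => hlK w hw (h ▸ hk₀)
  obtain ⟨s, k, t', rfl, hk, hs⟩ := exists_eq_append_cons_of_mem hk₀t hk₀
  refine ⟨w, hw, s, k, hk, (isPathList_support hp).of_isInfix ⟨p₁, t', by simp [hpt]⟩,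
    fun v hv => ?_⟩
  exact ⟨hs v hv, ht v (by simp [hv])⟩

lemma IsPathList.exists_isPathList_append_singleton (hl : IsPathList G l) {w : V} (hw : w ∈ l) :
    ∃ p, IsPathList G (p ++ [w]) ∧ p ⊆ l ∧ l.length ≤ 2 * p.length + 1 := by
  obtain ⟨p, q, rfl⟩ := List.append_of_mem hw
  rcases le_total q.length p.length with h | h
  · exact ⟨p, hl.of_isInfix ⟨[], q, by simp⟩, by simp, by simp; omega⟩
  · refine ⟨q.reverse, ?_, fun v hv => by simp_all, by simp; omega⟩
    exact hl.reverse.of_isInfix ⟨[], p.reverse, by simp⟩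

section MaximalTail

variable {M : List V} {u : V}

-- `M` cannot be grafted onto the first vertex of `l` in `K`.
lemma IsLongestPathList.exists_mem_of_mem_clique (hK : G.IsClique K)
    (hM : IsPathList G (M ++ [u])) (huK : u ∈ K)
    (hmax : ∀ N k, k ∈ K → IsPathList G (N ++ [k]) → (∀ v ∈ N, v ∉ K) → N.length ≤ M.length)
    (hl : IsLongestPathList G l) (hul : u ∉ l) {k : V} (hkl : k ∈ l) (hkK : k ∈ K) :
    ∃ m ∈ M, m ∈ l := by
  by_contra! hMl
  obtain ⟨p, k, q, rfl, hk, hp⟩ := exists_eq_append_cons_of_mem hkl hkK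
  have hpre : p ++ [k] <+: p ++ k :: q := ⟨q, by simp⟩
  have hpM : p.length ≤ M.length := hmax p k hk (hl.1.of_isInfix hpre.isInfix) hp
  have huk : u ≠ k := by rintro rfl; simp at hul
  have := hl.length_le_of_isPrefix hpre hM (by grind) (by simpa using hK huK hk huk)
  simp only [List.length_append, List.length_singleton] at this
  omega

-- Otherwise the longer half of `l`, a connection to `K` and `M` would form a path longer than `l`.
lemma IsLongestPathList.exists_apply_eq_of_disjoint_clique (hG : G.Connected)
    (hK : G.IsClique K) (hf : ∀ ⦃u v⦄, G.Adj u v → u ∉ K → v ∉ K → f u = f v)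
    (hM : IsPathList G (M ++ [u])) (huK : u ∈ K) (hMK : ∀ v ∈ M, v ∉ K)
    (hmax : ∀ N k, k ∈ K → IsPathList G (N ++ [k]) → (∀ v ∈ N, v ∉ K) → N.length ≤ M.length)
    (hl : IsLongestPathList G l) (hlK : ∀ v ∈ l, v ∉ K) :
    ∃ m ∈ M, ∃ v ∈ l, f v = f m := by
  by_contra! hne
  have := hG.nonempty
  obtain ⟨w, hw, s, k, hk, hsk, hs⟩ := exists_isPathList_of_disjoint hG hl.ne_nil ⟨u, huK⟩ hlK
  obtain ⟨p, hpw, hpl, hlen⟩ := hl.1.exists_isPathList_append_singleton hw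
  have hpsk : IsPathList G (p ++ w :: (s ++ [k])) :=
    hpw.append_cons hsk fun v hvp hvs => by grind
  have hps : IsPathList G (p ++ w :: s) := hpsk.of_isInfix ⟨[], [k], by simp⟩
  have hpsK : ∀ v ∈ p ++ w :: s, v ∉ K := by grind
  have hpsM : ∀ v ∈ p ++ w :: s, v ∉ M := fun v hv hvM =>
    hne v hvM w hw (hps.apply_eq_apply hf hpsK (by simp) hv)
  have hlenM := hmax (p ++ w :: s) k hk (by simpa using hpsk) hpsK
  obtain ⟨q, hq, hMq, hqk, hqmem⟩ := IsPathList.exists_suffix_head?_eq hK huK hk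
    (p := M.reverse) (by simpa using hM.reverse) (by simpa using fun h => hMK k h hk)
  have hnew : IsPathList G ((p ++ w :: s) ++ q) := by
    refine hps.append hq (fun a ha b hb => ?_) (by grind [List.Disjoint])
    obtain rfl : k = b := by simpa [hqk] using hb
    exact (List.isChain_append.1 (show ((p ++ w :: s) ++ [k]).IsChain G.Adj by
      simpa using hpsk.1)).2.2 a ha k (by simp)
  have := hl.2 _ hnew
  have := hMq.length_le
  simp only [List.length_append, List.length_cons, List.length_reverse] at *
  omega

end MaximalTail

lemma exists_ncard_le_one_forall_longest_exists_apply_eq [Finite V] (hG : G.Connected)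
    (hK : G.IsClique K) (hf : ∀ ⦃u v⦄, G.Adj u v → u ∉ K → v ∉ K → f u = f v) :
    ∃ (A : Set V) (a : α), A.ncard ≤ 1 ∧
      ∀ l ∈ avoiding {l | IsLongestPathList G l} A, ∃ v ∈ l, v ∉ K ∧ f v = a := by
  have := hG.nonempty
  rcases K.eq_empty_or_nonempty with rfl | ⟨k, hk⟩
  · refine ⟨∅, f (Classical.arbitrary V), by simp, fun l hl => ?_⟩
    obtain ⟨v, hv⟩ := List.exists_mem_of_ne_nil l hl.1.ne_nil
    obtain ⟨p, hp⟩ := hG.exists_isPath v (Classical.arbitrary V)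
    exact ⟨v, hv, by simp, (isPathList_support hp).apply_eq_apply hf (by simp) (by simp) (by simp)⟩
  obtain ⟨M, ⟨u, huK, hM, hMK⟩, hmax⟩ := exists_max_length_of_nodup
    (P := fun M => ∃ u ∈ K, IsPathList G (M ++ [u]) ∧ ∀ v ∈ M, v ∉ K)
    (fun M ⟨u, _, hM, _⟩ => hM.2.of_append_left)
    ⟨[], k, hk, by simp [IsPathList]⟩
  have hmax' N k (hk : k ∈ K) (hN : IsPathList G (N ++ [k])) (hNK : ∀ v ∈ N, v ∉ K) :
      N.length ≤ M.length := hmax N ⟨k, hk, hN, hNK⟩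
  have hMpath : IsPathList G M := hM.of_isInfix ⟨[], [u], by simp⟩
  have key l (hl : l ∈ avoiding {l | IsLongestPathList G l} {u}) :
      ∃ m ∈ M, ∃ v ∈ l, v ∉ K ∧ f v = f m := by
    by_cases hlK : ∀ v ∈ l, v ∉ K
    · obtain ⟨m, hm, v, hv, hvm⟩ :=
        hl.1.exists_apply_eq_of_disjoint_clique hG hK hf hM huK hMK hmax' hlK
      exact ⟨m, hm, v, hv, hlK v hv, hvm⟩
    · push Not at hlK
      obtain ⟨k, hkl, hkK⟩ := hlK
      obtain ⟨m, hm, hml⟩ := hl.1.exists_mem_of_mem_clique hK hM huK hmax' (hl.2 u rfl) hkl hkK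
      exact ⟨m, hm, m, hml, hMK m hm, rfl⟩
  rcases M.eq_nil_or_concat with rfl | ⟨M', m₀, rfl⟩
  · exact ⟨{u}, f u, by simp, fun l hl => by simpa using key l hl⟩
  · refine ⟨{u}, f m₀, by simp, fun l hl => ?_⟩
    obtain ⟨m, hm, v, hv, hvK, hvm⟩ := key l hl
    exact ⟨v, hv, hvK, hvm.trans (hMpath.apply_eq_apply hf hMK hm (by simp))⟩

end CliqueLocalization

section ForestOrder

/-- A partial order in which any two elements with a common upper bound are comparable, as in a
forest ordered away from its roots. -/
class IsForestOrder (W : Type*) [PartialOrder W] : Prop where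
  le_or_le_of_le : ∀ {x y w : W}, x ≤ w → y ≤ w → x ≤ y ∨ y ≤ x

variable {W : Type*} [PartialOrder W] {x y z m b d t : W}

section IsForestOrder

variable [IsForestOrder W]

lemma eq_or_le_of_covBy (h : y ⋖ b) (ht : t ≤ b) : t = b ∨ t ≤ y := by
  rcases IsForestOrder.le_or_le_of_le h.le ht with hyt | hty
  · exact (h.eq_or_eq hyt ht).symm.imp_right le_of_eq
  · exact Or.inr hty

lemma eq_of_covBy_of_covBy {y' : W} (h : y ⋖ b) (h' : y' ⋖ b) : y = y' :=
  le_antisymm ((eq_or_le_of_covBy h' h.le).resolve_left h.ne)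
    ((eq_or_le_of_covBy h h'.le).resolve_left h'.ne)

lemma eq_of_covBy_of_covBy_of_le_of_le (hb : m ⋖ b) (hd : m ⋖ d) (hbz : b ≤ z) (hdz : d ≤ z) :
    b = d := by
  rcases IsForestOrder.le_or_le_of_le hbz hdz with h | h
  · exact (hd.eq_or_eq hb.le h).resolve_left hb.lt.ne'
  · exact ((hb.eq_or_eq hd.le h).resolve_left hd.lt.ne').symm

end IsForestOrder

/-- The roots of the branches hanging off the chain from `x` to `z`: the elements that cover an
element of `Icc x z` without being below `z`. -/
def offBranches (x z : W) : Set W := {b | ∃ y, x ≤ y ∧ y ≤ z ∧ y ⋖ b ∧ ¬ b ≤ z}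

lemma lt_of_mem_offBranches (h : b ∈ offBranches x z) : x < b := by
  obtain ⟨y, hxy, -, hyb, -⟩ := h
  exact hxy.trans_lt hyb.lt

lemma offBranches_diff_Iic_subset (hmz : m ≤ z) :
    offBranches x m \ Set.Iic z ⊆ offBranches x z := by
  rintro b ⟨⟨y, hxy, hym, hyb, -⟩, hbz⟩
  exact ⟨y, hxy, hym.trans hmz, hyb, hbz⟩

lemma offBranches_subset_offBranches (hxy : x ≤ y) : offBranches y z ⊆ offBranches x z := by
  rintro b ⟨y', hyy', hb⟩
  exact ⟨y', hxy.trans hyy', hb⟩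

lemma le_or_exists_mem_offBranches [Finite W] (hxz : x ≤ z) (hxt : x ≤ t) :
    t ≤ z ∨ ∃ b ∈ offBranches x z, b ≤ t := by
  obtain ⟨y, ⟨hxy, hyz, hyt⟩, hmax⟩ := Set.Finite.exists_maximal
    (Set.toFinite {y | x ≤ y ∧ y ≤ z ∧ y ≤ t}) ⟨x, le_rfl, hxz, hxt⟩
  rcases eq_or_lt_of_le hyt with rfl | hlt
  · exact Or.inl hyz
  · obtain ⟨b, hyb, hbt⟩ := exists_covBy_le_of_lt hlt
    refine Or.inr ⟨b, ⟨y, hxy, hyz, hyb, fun hbz => ?_⟩, hbt⟩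
    exact hyb.lt.not_ge (hmax ⟨hxy.trans hyb.le, hbz, hbt⟩ hyb.le)

lemma covBy_of_mem_offBranches_of_le [IsForestOrder W] (hd : d ∈ offBranches x m) (hmz : m ≤ z)
    (hdz : d ≤ z) : m ⋖ d := by
  obtain ⟨y, -, hym, hyd, hdm⟩ := hd
  have hmd : m ≤ d := (IsForestOrder.le_or_le_of_le hdz hmz).resolve_left hdm
  rcases eq_or_le_of_covBy hyd hmd with rfl | hmy
  · exact absurd le_rfl hdm
  · exact le_antisymm hym hmy ▸ hyd

lemma eq_of_mem_offBranches_of_le [IsForestOrder W] (hb : b ∈ offBranches x z)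
    (hd : d ∈ offBranches x z) (hbt : b ≤ t) (hdt : d ≤ t) : b = d := by
  wlog hbd : b ≤ d generalizing b d
  · exact (this hd hb hdt hbt ((IsForestOrder.le_or_le_of_le hbt hdt).resolve_left hbd)).symm
  obtain ⟨y, -, hyz, hyd, -⟩ := hd
  obtain ⟨-, -, -, -, hbz⟩ := hb
  exact (eq_or_le_of_covBy hyd hbd).resolve_right fun hby => hbz (hby.trans hyz)

/-- Cutter wins the game on `Ici x`, rooted at `x`, within the given number of rounds: the
positions of the game are determined by their roots, and a round replaces the root `x` by an element
of `offBranches x z` for Cutter's choice of `z`. -/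
def CutterWinsAbove : ℕ → W → Prop
  | 0, _ => False
  | t + 1, x => ∃ z, x ≤ z ∧ ∀ b ∈ offBranches x z, CutterWinsAbove t b

namespace CutterWinsAbove

variable {n : ℕ}

lemma pos (h : CutterWinsAbove n x) : 0 < n := by
  cases n with
  | zero => exact h.elim
  | succ n => exact n.succ_pos

lemma succ (h : CutterWinsAbove n x) : CutterWinsAbove (n + 1) x := by
  induction n generalizing x with
  | zero => exact h.elim
  | succ n ih =>
    obtain ⟨z, hxz, h⟩ := h
    exact ⟨z, hxz, fun b hb => ih (h b hb)⟩

lemma of_le [Finite W] (h : CutterWinsAbove n x) (hxy : x ≤ y) : CutterWinsAbove n y := by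
  induction n generalizing x y with
  | zero => exact h.elim
  | succ n ih =>
    obtain ⟨z, hxz, h⟩ := h
    rcases le_or_exists_mem_offBranches hxz hxy with hyz | ⟨b, hb, hby⟩
    · exact ⟨z, hyz, fun b hb => h b (offBranches_subset_offBranches hxy hb)⟩
    · exact (ih (h b hb) hby).succ

end CutterWinsAbove

end ForestOrder

section RootedTreeRep

variable {V W : Type*} [PartialOrder W] {G : SimpleGraph V}

/-- A representation of `G` by intersecting subtrees of a rooted forest `W`, ordered away from its
roots. Connectedness of the subtree `S v` is expressed by `sep`: if `S v` has elements both inside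
and outside the branch `Ici b`, then it contains `b` and a parent of `b`. -/
structure RootedTreeRep (W : Type*) [PartialOrder W] (G : SimpleGraph V) where
  S : V → Set W
  nonempty : ∀ v, (S v).Nonempty
  adj_iff : ∀ ⦃u v⦄, u ≠ v → (G.Adj u v ↔ (S u ∩ S v).Nonempty)
  sep : ∀ ⦃v b s t⦄, s ∈ S v → b ≤ s → t ∈ S v → ¬ b ≤ t → b ∈ S v ∧ ∃ y ∈ S v, y ⋖ b

namespace RootedTreeRep

/-- The vertices whose subtree contains `y`. -/
def bag (R : RootedTreeRep W G) (y : W) : Set V := {v | y ∈ R.S v}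

/-- The vertices whose subtree contains a parent of `b`. -/
def parentBag (R : RootedTreeRep W G) (b : W) : Set V := {v | ∃ y ∈ R.S v, y ⋖ b}

/-- The vertices whose subtree is contained in the branch rooted at `b`. -/
def inside (R : RootedTreeRep W G) (b : W) : Set V := {v | R.S v ⊆ Set.Ici b}

/-- The core of a path given as a list of vertices: the host vertices lying in the subtrees of two
consecutive vertices of the path. -/
def listCore (R : RootedTreeRep W G) (l : List V) : Set W :=
  {t | ∃ u v, AreConsecutive l u v ∧ t ∈ R.S u ∧ t ∈ R.S v}

/-- The branch rooted at `b` captures the core of `l`. -/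
def Touches (R : RootedTreeRep W G) (l : List V) (b : W) : Prop := ∃ t ∈ R.listCore l, b ≤ t

variable {R : RootedTreeRep W G} {l : List V} {u v w c : V} {b d s t x y : W}

lemma mem_S_of_le_of_le (hs : s ∈ R.S v) (ht : t ∈ R.S v) (hsb : s ≤ b) (hbt : b ≤ t) :
    b ∈ R.S v := by
  by_cases hbs : b ≤ s
  · exact le_antisymm hsb hbs ▸ hs
  · exact (R.sep ht hbt hs hbs).1

lemma exists_mem_S_and_mem_S (h : G.Adj u v) : ∃ t, t ∈ R.S u ∧ t ∈ R.S v :=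
  (R.adj_iff h.ne).1 h

lemma isClique_bag (R : RootedTreeRep W G) (y : W) : G.IsClique (R.bag y) :=
  fun _ hu _ hv huv => (R.adj_iff huv).2 ⟨y, hu, hv⟩

lemma inside_anti (hbd : b ≤ d) : R.inside d ⊆ R.inside b :=
  fun _ hv _ ht => hbd.trans (hv ht)

lemma mem_bag_of_notMem_inside (hs : s ∈ R.S v) (hbs : b ≤ s) (hv : v ∉ R.inside b) :
    v ∈ R.bag b := by
  obtain ⟨t, ht, hbt⟩ := Set.not_subset.1 hv
  exact (R.sep hs hbs ht hbt).1

lemma mem_parentBag_of_notMem_inside (hs : s ∈ R.S v) (hbs : b ≤ s) (hv : v ∉ R.inside b) :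
    v ∈ R.parentBag b := by
  obtain ⟨t, ht, hbt⟩ := Set.not_subset.1 hv
  exact (R.sep hs hbs ht hbt).2

lemma notMem_inside_of_mem_parentBag (hv : v ∈ R.parentBag b) : v ∉ R.inside b := by
  obtain ⟨y, hy, hyb⟩ := hv
  exact fun h => hyb.lt.not_ge (h hy)

lemma mem_parentBag_of_adj (huv : G.Adj u v) (hu : u ∈ R.inside b) (hv : v ∉ R.inside b) :
    v ∈ R.parentBag b := by
  obtain ⟨t, htu, htv⟩ := R.exists_mem_S_and_mem_S huv
  exact mem_parentBag_of_notMem_inside htv (hu htu) hv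

lemma mem_bag_of_mem_parentBag [IsForestOrder W] (hv : v ∈ R.parentBag b) (hyb : y ⋖ b) :
    v ∈ R.bag y := by
  obtain ⟨y', hy', hyb'⟩ := hv
  exact eq_of_covBy_of_covBy hyb' hyb ▸ hy'

lemma isClique_parentBag [IsForestOrder W] (R : RootedTreeRep W G) (b : W) :
    G.IsClique (R.parentBag b) := by
  intro u hu v hv huv
  obtain ⟨y, -, hyb⟩ := id hu
  exact R.isClique_bag y (mem_bag_of_mem_parentBag hu hyb) (mem_bag_of_mem_parentBag hv hyb) huv

section Touches

-- A vertex of the bag of `t` outside `l` could be inserted between `u` and `v`.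
lemma mem_of_mem_bag_of_mem_listCore (hl : IsLongestPathList G l) (ht : t ∈ R.listCore l)
    (hw : w ∈ R.bag t) : w ∈ l := by
  obtain ⟨u, v, hl', hu, hv⟩ : ∃ u v, [u, v] <:+: l ∧ t ∈ R.S u ∧ t ∈ R.S v := by
    obtain ⟨u, v, h | h, hu, hv⟩ := ht
    · exact ⟨u, v, h, hu, hv⟩
    · exact ⟨v, u, h, hv, hu⟩
  by_contra hwl
  have huw : u ≠ w := fun h => hwl (h ▸ hl'.subset (by simp))
  have hwv : w ≠ v := fun h => hwl (h ▸ hl'.subset (by simp))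
  have := hl.length_le_of_isInfix (s := []) hl' (q := [w]) (by simp [IsPathList]) (by simpa)
    (by simpa using R.isClique_bag t hu hw huw) (by simpa using R.isClique_bag t hw hv hwv)
  simp at this

lemma Touches.two_le_length (h : R.Touches l b) : 2 ≤ l.length := by
  obtain ⟨t, ⟨u, v, huv | huv, -⟩, -⟩ := h <;> exact huv.length_le

lemma touches_of_mem_inside (hl : IsPathList G l) (hlen : 2 ≤ l.length) (hv : v ∈ l)
    (hvb : v ∈ R.inside b) : R.Touches l b := by
  obtain ⟨w, hvw⟩ := exists_areConsecutive_of_mem hv hlen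
  obtain ⟨t, htv, htw⟩ := R.exists_mem_S_and_mem_S (hl.adj_of_areConsecutive hvw)
  exact ⟨t, ⟨v, w, hvw, htv, htw⟩, hvb htv⟩

end Touches

/-- After deleting at most `n` vertices from `G`, the surviving lists of the family `F`, if there
are any, all touch the branch rooted at one and the same element of `B`. -/
def Localizes (R : RootedTreeRep W G) (n : ℕ) (F : Set (List V)) (B : Set W) : Prop :=
  ∃ A : Set V, A.ncard ≤ n ∧
    (avoiding F A = ∅ ∨ ∃ b ∈ B, ∀ l ∈ avoiding F A, R.Touches l b)

namespace Localizes

variable {n k : ℕ} {F F' : Set (List V)} {A : Set V} {B B' : Set W}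

lemma mono (h : R.Localizes n F B) (hnk : n ≤ k) (hF : F' ⊆ F) (hB : B ⊆ B') :
    R.Localizes k F' B' := by
  obtain ⟨A, hA, h⟩ := h
  refine ⟨A, hA.trans hnk, h.imp (Set.subset_eq_empty (avoiding_mono hF A)) ?_⟩
  rintro ⟨b, hb, h⟩
  exact ⟨b, hB hb, fun l hl => h l (avoiding_mono hF A hl)⟩

lemma of_avoiding (h : R.Localizes n (avoiding F A) B) (hA : A.ncard ≤ k) :
    R.Localizes (n + k) F B := by
  obtain ⟨A', hA', h⟩ := h
  rw [avoiding_avoiding] at h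
  exact ⟨A ∪ A', (Set.ncard_union_le A A').trans (by omega), h⟩

lemma of_avoiding_eq_empty (h : avoiding F A = ∅) : R.Localizes A.ncard F B :=
  ⟨A, le_rfl, Or.inl h⟩

end Localizes

section Runs

variable {B : Set W} {N s : List V} {a a' c' : V}

/-- A path `a :: (N ++ [a'])` through the branch rooted at `b`: its interior `N` lies inside the
branch and its ends have subtrees reaching the parent of `b`. -/
structure IsBridge (R : RootedTreeRep W G) (b : W) (a : V) (N : List V) (a' : V) : Prop where
  isPathList : IsPathList G (a :: (N ++ [a']))
  left_mem : a ∈ R.parentBag b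
  right_mem : a' ∈ R.parentBag b
  mem_inside : ∀ w ∈ N, w ∈ R.inside b

/-- A path `s ++ [u]` that starts inside the branch rooted at `b` and leaves it at its last vertex
`u`, whose subtree reaches the parent of `b`. -/
structure IsExit (R : RootedTreeRep W G) (b : W) (s : List V) (u : V) : Prop where
  isPathList : IsPathList G (s ++ [u])
  last_mem : u ∈ R.parentBag b
  mem_inside : ∀ w ∈ s, w ∈ R.inside b

lemma exists_isExit_of_hasInitialRun (hl : IsPathList G l)
    (h : HasInitialRun (R.inside b) l) : ∃ s u, s ≠ [] ∧ s ++ [u] <+: l ∧ R.IsExit b s u := by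
  obtain ⟨s, u, hsu, hs, hsI, hu⟩ := h
  refine ⟨s, u, hs, hsu, hl.of_isInfix hsu.isInfix, ?_, hsI⟩
  obtain ⟨s', w, rfl⟩ := (List.eq_nil_or_concat s).resolve_left hs
  have hwu : [w, u] <:+: l := .trans ⟨s', [], by simp⟩ hsu.isInfix
  exact mem_parentBag_of_adj (hl.adj hwu) (hsI w (by simp)) hu

lemma exists_isBridge_of_hasInnerRun (hl : IsPathList G l) (h : HasInnerRun (R.inside b) l) :
    ∃ u s u', u :: (s ++ [u']) <:+: l ∧ R.IsBridge b u s u' := by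
  obtain ⟨u, s, u', hsu, hs, hsI, hu, hu'⟩ := h
  refine ⟨u, s, u', hsu, hl.of_isInfix hsu, ?_, ?_, hsI⟩
  · obtain ⟨w, s', rfl⟩ := List.exists_cons_of_ne_nil hs
    have huw : [u, w] <:+: l := .trans ⟨[], s' ++ [u'], by simp⟩ hsu
    exact mem_parentBag_of_adj (hl.adj huw).symm (hsI w (by simp)) hu
  · obtain ⟨s', w, rfl⟩ := (List.eq_nil_or_concat s).resolve_left hs
    have hwu' : [w, u'] <:+: l := .trans ⟨u :: s', [], by simp⟩ hsu
    exact mem_parentBag_of_adj (hl.adj hwu') (hsI w (by simp)) hu'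

variable [IsForestOrder W]

-- Otherwise the run of `l` could be replaced by the bridge, extended by `c` and `c'`.
lemma IsBridge.exists_mem_of_length_le (hN : R.IsBridge b a N a') (hc : c ∈ R.parentBag b)
    (hc' : c' ∈ R.parentBag b) (hcc' : c ≠ c') (hl : IsLongestPathList G l)
    {u u' : V} (hs : u :: (s ++ [u']) <:+: l) (hsN : s.length ≤ N.length)
    (hu : u ∈ R.parentBag d) (hu' : u' ∈ R.parentBag d) (hcd : c ∈ R.parentBag d)
    (hcd' : c' ∈ R.parentBag d) (hcl : ∀ v ∈ ({c, c', a, a'} : Set V), v ∉ l) :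
    ∃ v ∈ l, v ∈ R.inside b := by
  by_contra! hlb
  obtain ⟨q, hq, hlen, hhead, hlast, hmem⟩ := IsPathList.exists_suffix_ends
    (R.isClique_parentBag b) hN.left_mem hN.right_mem hc hc' hcc' hN.isPathList
    (fun h => notMem_inside_of_mem_parentBag hc (hN.mem_inside c h))
    (fun h => notMem_inside_of_mem_parentBag hc' (hN.mem_inside c' h))
  have hadj {w e : V} (hw : w ∈ R.parentBag d) (hwl : w ∈ l) (he : e = c ∨ e = c') :
      G.Adj w e := by
    have hel : e ∉ l := hcl e (by rcases he with rfl | rfl <;> simp)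
    have hed : e ∈ R.parentBag d := by rcases he with rfl | rfl <;> assumption
    exact R.isClique_parentBag d hw hed (by rintro rfl; exact hel hwl)
  have hql : ∀ w ∈ q, w ∉ l := by
    intro w hw hwl
    rcases hmem w hw with rfl | rfl | hw
    · exact hcl w (by simp) hwl
    · exact hcl w (by simp) hwl
    · simp only [List.mem_cons, List.mem_append, List.not_mem_nil, or_false] at hw
      rcases hw with rfl | hw | rfl
      · exact hcl w (by simp) hwl
      · exact hlb w hwl (hN.mem_inside w hw)
      · exact hcl w (by simp) hwl
  have := hl.length_le_of_isInfix hs hq hql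
    (fun e he => hadj hu (hs.subset (by simp)) (hhead e he))
    (fun e he => (hadj hu' (hs.subset (by simp)) (hlast e he)).symm)
  omega

lemma localizes_hasInnerRun [Finite V] (R : RootedTreeRep W G) (hcc' : c ≠ c')
    (hB : ∀ b ∈ B, c ∈ R.parentBag b ∧ c' ∈ R.parentBag b) :
    R.Localizes 2 {l | IsLongestPathList G l ∧ c ∉ l ∧ c' ∉ l ∧
      ∃ b ∈ B, HasInnerRun (R.inside b) l} B := by
  by_cases hbridge : ∃ N, ∃ b ∈ B, ∃ a a', R.IsBridge b a N a'
  · obtain ⟨N, ⟨b, hb, a, a', hN⟩, hmax⟩ := exists_max_length_of_nodup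
      (P := fun N => ∃ b ∈ B, ∃ a a', R.IsBridge b a N a')
      (fun N ⟨_, _, a, a', h⟩ => (h.isPathList.of_isInfix ⟨[a], [a'], by simp⟩).2) hbridge
    refine ⟨{a, a'}, (Set.ncard_insert_le a {a'}).trans (by simp), Or.inr ⟨b, hb, ?_⟩⟩
    rintro l ⟨⟨hl, hcl, hcl', d, hd, hrun⟩, hal⟩
    obtain ⟨u, s, u', hs, hbr⟩ := exists_isBridge_of_hasInnerRun hl.1 hrun
    obtain ⟨v, hv, hvb⟩ := hN.exists_mem_of_length_le (hB b hb).1 (hB b hb).2 hcc' hl hs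
      (hmax s ⟨d, hd, u, u', hbr⟩) hbr.left_mem hbr.right_mem (hB d hd).1 (hB d hd).2
      (by simp_all)
    have hlen : 2 ≤ l.length := (by simp : 2 ≤ (u :: (s ++ [u'])).length).trans hs.length_le
    exact touches_of_mem_inside hl.1 hlen hv hvb
  · refine (Localizes.of_avoiding_eq_empty (A := ∅) ?_).mono (by simp) subset_rfl subset_rfl
    refine Set.eq_empty_of_forall_notMem ?_
    rintro l ⟨⟨hl, -, -, d, hd, hrun⟩, -⟩
    obtain ⟨u, s, u', -, hbr⟩ := exists_isBridge_of_hasInnerRun hl.1 hrun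
    exact hbridge ⟨s, d, hd, u, u', hbr⟩

-- Otherwise the initial run of `l` could be replaced by the exit `M ++ [a]`, extended by `c`.
lemma IsExit.exists_mem_of_length_le {M : List V} (hM : R.IsExit b M a)
    (hc : c ∈ R.parentBag b) (hl : IsLongestPathList G l) {u : V} (hs : s ++ [u] <+: l)
    (hsM : s.length ≤ M.length) (hu : u ∈ R.parentBag d) (hcd : c ∈ R.parentBag d)
    (hcl : c ∉ l) (hal : a ∉ l) : ∃ v ∈ l, v ∈ R.inside b := by
  by_contra! hlb
  have hcM : c ∉ M := fun h => notMem_inside_of_mem_parentBag hc (hM.mem_inside c h)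
  obtain ⟨q, hq, hMq, hqc, hmem⟩ := IsPathList.exists_suffix_head?_eq (R.isClique_parentBag b)
    hM.last_mem hc (p := M.reverse) (by simpa using hM.isPathList.reverse) (by simpa using hcM)
  have huc : G.Adj c u := R.isClique_parentBag d hcd hu
    fun h => hcl (h ▸ hs.subset (by simp))
  have hql : ∀ w ∈ q, w ∉ l := by
    intro w hw hwl
    rcases hmem w hw with rfl | hw
    · exact hcl hwl
    · rcases List.mem_cons.1 hw with rfl | hw
      · exact hal hwl
      · exact hlb w hwl (hM.mem_inside w (List.mem_reverse.1 hw))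
  have := hl.length_le_of_isPrefix hs hq.reverse (by simpa using hql) (by simp [hqc, huc])
  have := hMq.length_le
  simp only [List.length_cons, List.length_reverse] at *
  omega

lemma localizes_hasInitialRun [Finite V] (R : RootedTreeRep W G)
    (hB : ∀ b ∈ B, c ∈ R.parentBag b) :
    R.Localizes 1 {l | IsLongestPathList G l ∧ c ∉ l ∧
      ∃ b ∈ B, HasInitialRun (R.inside b) l ∨ HasInitialRun (R.inside b) l.reverse} B := by
  by_cases hexit : ∃ M, ∃ b ∈ B, ∃ a, R.IsExit b M a
  · obtain ⟨M, ⟨b, hb, a, hM⟩, hmax⟩ := exists_max_length_of_nodup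
      (P := fun M => ∃ b ∈ B, ∃ a, R.IsExit b M a)
      (fun M ⟨_, _, a, h⟩ => (h.isPathList.of_isInfix ⟨[], [a], by simp⟩).2) hexit
    have key {l : List V} (hl : IsLongestPathList G l) (hcl : c ∉ l) (hal : a ∉ l) {d : W}
        (hd : d ∈ B) (hrun : HasInitialRun (R.inside d) l) :
        2 ≤ l.length ∧ ∃ v ∈ l, v ∈ R.inside b := by
      obtain ⟨s, u, hs, hsu, hex⟩ := exists_isExit_of_hasInitialRun hl.1 hrun
      refine ⟨?_, hM.exists_mem_of_length_le (hB b hb) hl hsu (hmax s ⟨d, hd, u, hex⟩)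
        hex.last_mem (hB d hd) hcl hal⟩
      have := List.length_pos_iff.2 hs
      exact (by simp; omega : 2 ≤ (s ++ [u]).length).trans hsu.length_le
    refine ⟨{a}, by simp, Or.inr ⟨b, hb, ?_⟩⟩
    rintro l ⟨⟨hl, hcl, d, hd, hrun⟩, hal⟩
    obtain ⟨hlen, v, hv, hvb⟩ : 2 ≤ l.length ∧ ∃ v ∈ l, v ∈ R.inside b := by
      rcases hrun with hrun | hrun
      · exact key hl hcl (hal a rfl) hd hrun
      · simpa using key hl.reverse (by simpa using hcl) (by simpa using hal a rfl) hd hrun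
    exact touches_of_mem_inside hl.1 hlen hv hvb
  · refine (Localizes.of_avoiding_eq_empty (A := ∅) ?_).mono (by simp) subset_rfl subset_rfl
    refine Set.eq_empty_of_forall_notMem ?_
    rintro l ⟨⟨hl, -, d, hd, hrun⟩, -⟩
    rcases hrun with hrun | hrun
    · obtain ⟨s, u, -, -, hex⟩ := exists_isExit_of_hasInitialRun hl.1 hrun
      exact hexit ⟨s, d, hd, u, hex⟩
    · obtain ⟨s, u, -, -, hex⟩ := exists_isExit_of_hasInitialRun hl.reverse.1 hrun
      exact hexit ⟨s, d, hd, u, hex⟩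

end Runs

section Guide

variable {m z : W} {c' p₀ : V}

/-- Two vertices `c` and `c'` whose subtrees contain the initial segment from `x` to `m` of the
chain from `x` to `z`, where `m` is so large that beyond `m` this chain meets no subtree containing
`x` except possibly that of `c`. -/
structure IsGuide (R : RootedTreeRep W G) (x z m : W) (c c' : V) : Prop where
  ne : c ≠ c'
  le_left : x ≤ m
  le_right : m ≤ z
  mem_bag : ∀ ⦃y⦄, x ≤ y → y ≤ m → c ∈ R.bag y ∧ c' ∈ R.bag y
  eq_of_covBy : ∀ ⦃b v⦄, m ⋖ b → b ≤ z → v ∈ R.bag x → v ∈ R.bag b → v = c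

lemma IsGuide.mem_parentBag (hg : R.IsGuide x z m c c') (hb : b ∈ offBranches x m) :
    c ∈ R.parentBag b ∧ c' ∈ R.parentBag b := by
  obtain ⟨y, hxy, hym, hyb, -⟩ := hb
  exact ⟨⟨y, (hg.mem_bag hxy hym).1, hyb⟩, ⟨y, (hg.mem_bag hxy hym).2, hyb⟩⟩

lemma IsGuide.not_le_of_mem_listCore (hg : R.IsGuide x z m c c') (hl : IsLongestPathList G l)
    (hcl : c ∉ l) (ht : t ∈ R.listCore l) (hxt : x ≤ t) : ¬ t ≤ m :=
  fun htm => hcl (mem_of_mem_bag_of_mem_listCore hl ht (hg.mem_bag hxt htm).1)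

variable [IsForestOrder W]

lemma exists_isGuide [Finite W] (hxz : x ≤ z) (hx : (R.bag x).Nontrivial) :
    ∃ m c c', R.IsGuide x z m c c' := by
  obtain ⟨m, ⟨hxm, hmz, hm⟩, hmax⟩ := Set.Finite.exists_maximal
    (Set.toFinite {y | x ≤ y ∧ y ≤ z ∧ (R.bag x ∩ R.bag y).Nontrivial}) ⟨x, le_rfl, hxz, by simpa⟩
  have hbeyond {b : W} (hmb : m ⋖ b) (hbz : b ≤ z) : (R.bag x ∩ R.bag b).Subsingleton :=
    Set.not_nontrivial_iff.1 fun h => hmb.lt.not_ge (hmax ⟨hxm.trans hmb.le, hbz, h⟩ hmb.le)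
  obtain ⟨c, hc, hcz⟩ : ∃ c ∈ R.bag x ∩ R.bag m,
      ∀ ⦃b v⦄, m ⋖ b → b ≤ z → v ∈ R.bag x → v ∈ R.bag b → v = c := by
    by_cases h : ∃ b v, m ⋖ b ∧ b ≤ z ∧ v ∈ R.bag x ∧ v ∈ R.bag b
    · obtain ⟨b, c, hmb, hbz, hcx, hcb⟩ := h
      refine ⟨c, ⟨hcx, mem_S_of_le_of_le hcx hcb hxm hmb.le⟩, fun d v hmd hdz hvx hvd => ?_⟩
      obtain rfl := eq_of_covBy_of_covBy_of_le_of_le hmb hmd hbz hdz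
      exact hbeyond hmb hbz ⟨hvx, hvd⟩ ⟨hcx, hcb⟩
    · obtain ⟨c, hc⟩ := hm.nonempty
      exact ⟨c, hc, fun b v hmb hbz hvx hvb => absurd ⟨b, v, hmb, hbz, hvx, hvb⟩ h⟩
  obtain ⟨c', hc', hcc'⟩ := hm.exists_ne c
  exact ⟨m, c, c', hcc'.symm, hxm, hmz, fun y hxy hym =>
    ⟨mem_S_of_le_of_le hc.1 hc.2 hxy hym, mem_S_of_le_of_le hc'.1 hc'.2 hxy hym⟩, hcz⟩

namespace IsGuide

-- If both subtrees left the branch, they would meet at the parent of `b`, which lies in the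
-- subtree of `c`.
lemma mem_inside_or_mem_inside (hg : R.IsGuide x z m c c') (hl : IsLongestPathList G l)
    (hcl : c ∉ l) (huv : AreConsecutive l u v) (htu : t ∈ R.S u) (htv : t ∈ R.S v)
    (hb : b ∈ offBranches x m) (hbt : b ≤ t) : u ∈ R.inside b ∨ v ∈ R.inside b := by
  by_contra! h
  have hu := mem_parentBag_of_notMem_inside htu hbt h.1
  have hv := mem_parentBag_of_notMem_inside htv hbt h.2
  obtain ⟨y, hxy, hym, hyb, -⟩ := hb
  exact hg.not_le_of_mem_listCore hl hcl
    ⟨u, v, huv, mem_bag_of_mem_parentBag hu hyb, mem_bag_of_mem_parentBag hv hyb⟩ hxy hym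

lemma mem_inside_of_le (hg : R.IsGuide x z m c c') (hd : d ∈ offBranches x m) (hdz : d ≤ z)
    (hs : s ∈ R.S v) (hds : d ≤ s) (hvc : v ≠ c) : v ∈ R.inside x := by
  by_contra hv
  have hxd := (lt_of_mem_offBranches hd).le
  have hvx := mem_bag_of_notMem_inside hs (hxd.trans hds) hv
  exact hvc (hg.eq_of_covBy (covBy_of_mem_offBranches_of_le hd hg.le_right hdz) hdz hvx
    (mem_S_of_le_of_le hvx hs hxd hds))

-- Since only `c` reaches from outside `Ici x` into `Ici d`, the path has to pass through another
-- branch on its way between the two.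
lemma exists_hasInnerRun_of_touches [Finite W] (hg : R.IsGuide x z m c c')
    (hl : IsLongestPathList G l) (hcl : c ∉ l) (hp₀ : p₀ ∈ l) (hp₀x : p₀ ∉ R.inside x)
    (hd : d ∈ offBranches x m) (hdz : d ≤ z) (hld : R.Touches l d) :
    ∃ b ∈ offBranches x m \ Set.Iic z, HasInnerRun (R.inside b) l := by
  have hne {v : V} (hv : v ∈ l) : v ≠ c := fun h => hcl (h ▸ hv)
  obtain ⟨s₀, ⟨u₀, v₀, hu₀, hs₀, -⟩, hds₀⟩ := hld
  obtain ⟨p, u, hpu, hpd, ⟨s, hsu, hds⟩, hends⟩ := exists_areConsecutive_notMem_mem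
    (Q := {v | ∃ s ∈ R.S v, d ≤ s}) hp₀ hu₀.mem_left
    (fun ⟨s, hs, hds⟩ => hp₀x (hg.mem_inside_of_le hd hdz hs hds (hne hp₀))) ⟨s₀, hs₀, hds₀⟩
  obtain ⟨t, htp, htu⟩ := R.exists_mem_S_and_mem_S (hl.1.adj_of_areConsecutive hpu)
  have hxt : x ≤ t := hg.mem_inside_of_le hd hdz hsu hds (hne hpu.mem_right) htu
  obtain ⟨b, hb, hbt⟩ := (le_or_exists_mem_offBranches hg.le_left hxt).resolve_left
    (hg.not_le_of_mem_listCore hl hcl ⟨p, u, hpu, htp, htu⟩ hxt)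
  have hbd : b ≠ d := fun h => hpd ⟨t, htp, h ▸ hbt⟩
  have hbz : ¬ b ≤ z := fun hbz => hbd (eq_of_covBy_of_covBy_of_le_of_le
    (covBy_of_mem_offBranches_of_le hb hg.le_right hbz)
    (covBy_of_mem_offBranches_of_le hd hg.le_right hdz) hbz hdz)
  have hub : u ∉ R.inside b := fun h => hbd (eq_of_mem_offBranches_of_le hb hd (h hsu) hds)
  have hpb : p ∈ R.inside b :=
    (hg.mem_inside_or_mem_inside hl hcl hpu htp htu hb hbt).resolve_right hub
  have hp₀b : p₀ ∉ R.inside b := fun h => hp₀x (inside_anti (lt_of_mem_offBranches hb).le h)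
  refine ⟨b, ⟨hb, hbz⟩, ?_⟩
  rcases hends with rfl | h | h
  · exact absurd hpb hp₀b
  · exact .of_sublist h hp₀b hpb hub
  · exact .of_sublist h hub hpb hp₀b

lemma exists_mem_inside_of_touches [Finite W] (hg : R.IsGuide x z m c c')
    (hl : IsLongestPathList G l) (hcl : c ∉ l) (hp₀ : p₀ ∈ l) (hp₀x : p₀ ∉ R.inside x)
    (hlx : R.Touches l x) :
    ∃ b ∈ offBranches x m \ Set.Iic z, ∃ v ∈ l, v ∈ R.inside b := by
  obtain ⟨t, ht, hxt⟩ := hlx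
  obtain ⟨d, hd, hdt⟩ := (le_or_exists_mem_offBranches hg.le_left hxt).resolve_left
    (hg.not_le_of_mem_listCore hl hcl ht hxt)
  by_cases hdz : d ≤ z
  · obtain ⟨b, hb, hrun⟩ :=
      hg.exists_hasInnerRun_of_touches hl hcl hp₀ hp₀x hd hdz ⟨t, ht, hdt⟩
    exact ⟨b, hb, hrun.exists_mem⟩
  · obtain ⟨u, v, huv, htu, htv⟩ := ht
    rcases hg.mem_inside_or_mem_inside hl hcl huv htu htv hd hdt with h | h
    · exact ⟨d, ⟨hd, hdz⟩, u, huv.mem_left, h⟩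
    · exact ⟨d, ⟨hd, hdz⟩, v, huv.mem_right, h⟩

-- The subtree of the first vertex avoids the chain from `x` to `m`, as otherwise `c` could be
-- prepended to `l`.
lemma exists_hasInitialRun_of_head? [Finite W] (hg : R.IsGuide x z m c c')
    (hl : IsLongestPathList G l) (hcl : c ∉ l) (hp₀ : p₀ ∈ l) (hp₀x : p₀ ∉ R.inside x)
    (hv : l.head? = some v) (hvx : v ∈ R.inside x) :
    ∃ b ∈ offBranches x m, HasInitialRun (R.inside b) l := by
  have hoff {y : W} (hxy : x ≤ y) (hym : y ≤ m) : y ∉ R.S v := by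
    intro hyv
    have hcv : G.Adj c v := R.isClique_bag y (hg.mem_bag hxy hym).1 hyv
      fun h => hcl (h ▸ List.mem_of_mem_head? hv)
    have := hl.length_le_of_isPrefix (s := []) (u := v)
      (List.singleton_prefix_iff_head?_eq_some.2 hv) (q := [c]) (by simp [IsPathList]) (by simpa)
      (by simpa)
    simp at this
  obtain ⟨s, hs⟩ := R.nonempty v
  obtain ⟨b, hb, hbs⟩ := (le_or_exists_mem_offBranches hg.le_left (hvx hs)).resolve_left
    fun hsm => hoff (hvx hs) hsm hs
  have hvb : v ∈ R.inside b := by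
    by_contra hvb
    obtain ⟨y, hxy, hym, hyb, -⟩ := id hb
    exact hoff hxy hym (mem_bag_of_mem_parentBag (mem_parentBag_of_notMem_inside hs hbs hvb) hyb)
  exact ⟨b, hb, .of_head? hv hvb hp₀ fun h => hp₀x (inside_anti (lt_of_mem_offBranches hb).le h)⟩

end IsGuide

end Guide

section Crossing

variable {n : ℕ} {m z : W} {c' : V}

/-- The longest paths that touch the branch rooted at `x` and have a vertex whose subtree leaves
it. -/
def crossing (R : RootedTreeRep W G) (x : W) : Set (List V) :=
  {l | IsLongestPathList G l ∧ R.Touches l x ∧ ∃ v ∈ l, v ∉ R.inside x}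

/-- The longest paths that touch the branch rooted at `x` and both of whose ends have subtrees
leaving it. -/
def endsOutside (R : RootedTreeRep W G) (x : W) : Set (List V) :=
  {l | IsLongestPathList G l ∧ R.Touches l x ∧
    (∀ v ∈ l.head?, v ∉ R.inside x) ∧ ∀ v ∈ l.getLast?, v ∉ R.inside x}

lemma endsOutside_subset_crossing (R : RootedTreeRep W G) (x : W) :
    R.endsOutside x ⊆ R.crossing x := by
  rintro l ⟨hl, hlx, hhead, -⟩
  have hne : l ≠ [] := by
    rintro rfl
    simpa using hlx.two_le_length
  exact ⟨hl, hlx, l.head hne, List.head_mem hne, hhead _ (List.head_mem_head? hne)⟩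

lemma exists_mem_bag_of_mem_crossing (hl : l ∈ R.crossing x) : ∃ v ∈ R.bag x, v ∈ l := by
  obtain ⟨hl, ⟨t, ⟨u, v, huv, htu, -⟩, hxt⟩, w, hw, hwx⟩ := hl
  by_cases hu : u ∈ R.inside x
  · obtain ⟨p, q, hpq, hp, hq, -⟩ := exists_areConsecutive_notMem_mem hw huv.mem_left hwx hu
    obtain ⟨s, hsp, hsq⟩ := R.exists_mem_S_and_mem_S (hl.1.adj_of_areConsecutive hpq)
    exact ⟨p, mem_bag_of_notMem_inside hsp (hq hsq) hp, hpq.mem_left⟩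
  · exact ⟨u, mem_bag_of_notMem_inside htu hxt hu, huv.mem_left⟩

lemma localizes_crossing_of_subsingleton (B : Set W) (hx : (R.bag x).Subsingleton) :
    R.Localizes 1 (R.crossing x) B := by
  refine (Localizes.of_avoiding_eq_empty (A := R.bag x) ?_).mono ?_ subset_rfl subset_rfl
  · refine Set.eq_empty_of_forall_notMem fun l hl => ?_
    obtain ⟨v, hvx, hvl⟩ := exists_mem_bag_of_mem_crossing hl.1
    exact hl.2 v hvx hvl
  · exact (Set.ncard_le_one hx.finite).2 hx

variable [IsForestOrder W]

lemma IsGuide.localizes_of_hasInnerRun [Finite V] (hg : R.IsGuide x z m c c') {F : Set (List V)}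
    (hF : ∀ l ∈ F, IsLongestPathList G l ∧
      (c ∉ l → ∃ b ∈ offBranches x m \ Set.Iic z, HasInnerRun (R.inside b) l)) :
    R.Localizes 4 F (offBranches x z) := by
  have hinner := R.localizes_hasInnerRun hg.ne (B := offBranches x m \ Set.Iic z)
    fun b hb => hg.mem_parentBag hb.1
  have hcc' : ({c, c'} : Set V).ncard ≤ 2 := (Set.ncard_insert_le c {c'}).trans (by simp)
  refine (hinner.mono le_rfl ?_ (offBranches_diff_Iic_subset hg.le_right)).of_avoiding hcc'
  rintro l ⟨hl, hcl⟩
  exact ⟨(hF l hl).1, hcl c (by simp), hcl c' (by simp), (hF l hl).2 (hcl c (by simp))⟩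

variable [Finite W]

lemma IsGuide.exists_hasInnerRun_of_mem_endsOutside (hg : R.IsGuide x z m c c')
    (hl : l ∈ R.endsOutside x) (hcl : c ∉ l) :
    ∃ b ∈ offBranches x m \ Set.Iic z, HasInnerRun (R.inside b) l := by
  obtain ⟨hlong, hlx, p₀, hp₀, hp₀x⟩ := R.endsOutside_subset_crossing x hl
  obtain ⟨b, hb, v, hv, hvb⟩ := hg.exists_mem_inside_of_touches hlong hcl hp₀ hp₀x hlx
  have hbx : R.inside b ⊆ R.inside x := inside_anti (lt_of_mem_offBranches hb.1).le
  exact ⟨b, hb, .of_mem hv hvb (fun w hw h => hl.2.2.1 w hw (hbx h))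
    (fun w hw h => hl.2.2.2 w hw (hbx h))⟩

lemma IsGuide.exists_hasInitialRun_of_notMem_endsOutside (hg : R.IsGuide x z m c c')
    (hl : l ∈ R.crossing x) (hcl : c ∉ l) (hends : l ∉ R.endsOutside x) :
    ∃ b ∈ offBranches x m, HasInitialRun (R.inside b) l ∨ HasInitialRun (R.inside b) l.reverse := by
  obtain ⟨hlong, hlx, p₀, hp₀, hp₀x⟩ := hl
  by_cases hhead : ∃ v ∈ l.head?, v ∈ R.inside x
  · obtain ⟨v, hv, hvx⟩ := hhead
    obtain ⟨b, hb, hrun⟩ := hg.exists_hasInitialRun_of_head? hlong hcl hp₀ hp₀x hv hvx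
    exact ⟨b, hb, Or.inl hrun⟩
  · obtain ⟨v, hv, hvx⟩ : ∃ v ∈ l.getLast?, v ∈ R.inside x := by
      by_contra! hlast
      push Not at hhead
      exact hends ⟨hlong, hlx, hhead, hlast⟩
    obtain ⟨b, hb, hrun⟩ := hg.exists_hasInitialRun_of_head? hlong.reverse (by simpa using hcl)
      (List.mem_reverse.2 hp₀) hp₀x (by simpa using hv) hvx
    exact ⟨b, hb, Or.inr hrun⟩

variable [Finite V]

lemma localizes_endsOutside (R : RootedTreeRep W G) (hxz : x ≤ z) :
    R.Localizes 4 (R.endsOutside x) (offBranches x z) := by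
  rcases (R.bag x).subsingleton_or_nontrivial with hx | hx
  · exact (localizes_crossing_of_subsingleton _ hx).mono (by simp)
      (R.endsOutside_subset_crossing x) subset_rfl
  · obtain ⟨m, c, c', hg⟩ := exists_isGuide hxz hx
    exact hg.localizes_of_hasInnerRun
      fun l hl => ⟨hl.1, hg.exists_hasInnerRun_of_mem_endsOutside hl⟩

lemma exists_avoiding_endsOutside_eq_empty (R : RootedTreeRep W G) (hwin : CutterWinsAbove n x) :
    ∃ A : Set V, A.ncard ≤ 4 * n ∧ avoiding (R.endsOutside x) A = ∅ := by
  induction n generalizing x with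
  | zero => exact hwin.elim
  | succ n ih =>
    obtain ⟨z, hxz, hwin⟩ := hwin
    obtain ⟨A, hA, hempty | ⟨b, hb, htouch⟩⟩ := R.localizes_endsOutside hxz
    · exact ⟨A, by omega, hempty⟩
    · obtain ⟨A', hA', hempty⟩ := ih (hwin b hb)
      refine ⟨A ∪ A', (Set.ncard_union_le A A').trans (by omega), ?_⟩
      rw [← avoiding_avoiding]
      have hbx : R.inside b ⊆ R.inside x := inside_anti (lt_of_mem_offBranches hb).le
      refine Set.subset_eq_empty (avoiding_mono (fun l hl => ?_) A') hempty
      exact ⟨hl.1.1, htouch l hl, fun v hv h => hl.1.2.2.1 v hv (hbx h),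
        fun v hv h => hl.1.2.2.2 v hv (hbx h)⟩

lemma IsGuide.localizes_crossing_diff_endsOutside (hg : R.IsGuide x z m c c') :
    R.Localizes 2 (R.crossing x \ R.endsOutside x) (offBranches x m) := by
  refine ((R.localizes_hasInitialRun (c := c) fun b hb => (hg.mem_parentBag hb).1).mono le_rfl
    (fun l hl => ?_) subset_rfl).of_avoiding (Set.ncard_singleton c).le
  exact ⟨hl.1.1.1, hl.2 c rfl,
    hg.exists_hasInitialRun_of_notMem_endsOutside hl.1.1 (hl.2 c rfl) hl.1.2⟩

lemma IsGuide.localizes_crossing (hg : R.IsGuide x z m c c') (hwin : CutterWinsAbove n x) :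
    R.Localizes (4 * n + 2) (R.crossing x) (offBranches x z) := by
  have hn := hwin.pos
  obtain ⟨A, hA, hdiff⟩ := hg.localizes_crossing_diff_endsOutside
  have hmem {l : List V} (hl : l ∈ avoiding (R.crossing x) A) (hends : l ∉ R.endsOutside x) :
      l ∈ avoiding (R.crossing x \ R.endsOutside x) A := ⟨⟨hl.1, hends⟩, hl.2⟩
  refine Localizes.of_avoiding ?_ hA
  rcases hdiff with hempty | ⟨b, hb, htouch⟩
  · refine (R.localizes_endsOutside (hg.le_left.trans hg.le_right)).mono (by omega)
      (fun l hl => ?_) subset_rfl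
    by_contra hends
    exact hempty.subset (hmem hl hends)
  by_cases hbz : b ≤ z
  · refine (hg.localizes_of_hasInnerRun fun l hl => ⟨hl.1.1, fun hcl => ?_⟩).mono (by omega)
      subset_rfl subset_rfl
    by_cases hends : l ∈ R.endsOutside x
    · exact hg.exists_hasInnerRun_of_mem_endsOutside hends hcl
    · obtain ⟨⟨hlong, -, p₀, hp₀, hp₀x⟩, -⟩ := id hl
      exact hg.exists_hasInnerRun_of_touches hlong hcl hp₀ hp₀x hb hbz (htouch l (hmem hl hends))
  · obtain ⟨A', hA', hempty⟩ := R.exists_avoiding_endsOutside_eq_empty hwin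
    refine ⟨A', hA', Or.inr ⟨b, offBranches_diff_Iic_subset hg.le_right ⟨hb, hbz⟩, fun l hl => ?_⟩⟩
    exact htouch l (hmem hl.1 fun hends => hempty.subset ⟨hends, hl.2⟩)

lemma localizes_crossing (R : RootedTreeRep W G) (hxz : x ≤ z) (hwin : CutterWinsAbove n x) :
    R.Localizes (4 * n + 2) (R.crossing x) (offBranches x z) := by
  rcases (R.bag x).subsingleton_or_nontrivial with hx | hx
  · exact (localizes_crossing_of_subsingleton _ hx).mono (by omega) subset_rfl subset_rfl
  · obtain ⟨m, c, c', hg⟩ := exists_isGuide hxz hx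
    exact hg.localizes_crossing hwin

end Crossing

section Main

variable [IsForestOrder W]

lemma setOf_covBy_and_mem_inside_eq_of_adj (huv : G.Adj u v) (hu : u ∉ R.bag y)
    (hv : v ∉ R.bag y) : {b | y ⋖ b ∧ u ∈ R.inside b} = {b | y ⋖ b ∧ v ∈ R.inside b} := by
  have key {u v : V} (huv : G.Adj u v) (hv : v ∉ R.bag y) {b : W} (hyb : y ⋖ b)
      (hub : u ∈ R.inside b) : v ∈ R.inside b := by
    by_contra hvb
    exact hv (mem_bag_of_mem_parentBag (mem_parentBag_of_adj huv hub hvb) hyb)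
  exact Set.ext fun b => and_congr_right fun hyb => ⟨key huv hv hyb, key huv.symm hu hyb⟩

variable [Finite W]

lemma exists_covBy_of_mem_inside (hv : v ∈ R.inside y) (hvy : v ∉ R.bag y) :
    ∃ b, y ⋖ b ∧ v ∈ R.inside b := by
  obtain ⟨s, hs⟩ := R.nonempty v
  obtain ⟨b, hyb, hbs⟩ := exists_covBy_le_of_lt
    (lt_of_le_of_ne (hv hs) fun h => hvy (h ▸ hs : y ∈ R.S v))
  refine ⟨b, hyb, ?_⟩
  by_contra hvb
  exact hvy (mem_bag_of_mem_parentBag (mem_parentBag_of_notMem_inside hs hbs hvb) hyb)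

variable [Finite V]

lemma exists_ncard_le_one_forall_longest (R : RootedTreeRep W G) (hG : G.Connected) (y : W) :
    ∃ A : Set V, A.ncard ≤ 1 ∧
      ((∀ l ∈ avoiding {l | IsLongestPathList G l} A, ∃ v ∈ l, v ∉ R.inside y) ∨
        ∃ b, y ⋖ b ∧ ∀ l ∈ avoiding {l | IsLongestPathList G l} A, ∃ v ∈ l, v ∈ R.inside b) := by
  obtain ⟨A, a, hA, h⟩ := exists_ncard_le_one_forall_longest_exists_apply_eq hG
    (R.isClique_bag y) (f := fun v => {b | y ⋖ b ∧ v ∈ R.inside b})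
    fun u v huv hu hv => setOf_covBy_and_mem_inside_eq_of_adj huv hu hv
  refine ⟨A, hA, ?_⟩
  by_cases hb : ∃ b, y ⋖ b ∧ b ∈ a
  · obtain ⟨b, hyb, hba⟩ := hb
    refine Or.inr ⟨b, hyb, fun l hl => ?_⟩
    obtain ⟨v, hv, -, rfl⟩ := h l hl
    exact ⟨v, hv, hba.2⟩
  · refine Or.inl fun l hl => ?_
    obtain ⟨v, hv, hvy, rfl⟩ := h l hl
    refine ⟨v, hv, fun hvin => hb ?_⟩
    obtain ⟨b, hyb, hvb⟩ := exists_covBy_of_mem_inside hvin hvy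
    exact ⟨b, hyb, hyb, hvb⟩

theorem localizes_of_touches (R : RootedTreeRep W G) (hG : G.Connected) {n : ℕ} {z : W}
    (hxz : x ≤ z) (hwin : CutterWinsAbove n x) {F : Set (List V)}
    (hF : ∀ l ∈ F, IsLongestPathList G l ∧ R.Touches l x) :
    R.Localizes (4 * n + 4) F (offBranches x z) := by
  obtain ⟨y, ⟨hxy, hyz, A, hA, hAy⟩, hmax⟩ := Set.Finite.exists_maximal (Set.toFinite
    {y | x ≤ y ∧ y ≤ z ∧ ∃ A : Set V, A.ncard ≤ 1 ∧ ∀ l ∈ avoiding F A, R.Touches l y})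
    ⟨x, le_rfl, hxz, ∅, by simp, fun l hl => (hF l hl.1).2⟩
  obtain ⟨A', hA', hout | ⟨b, hyb, hb⟩⟩ := R.exists_ncard_le_one_forall_longest hG y
  · have hcross := (R.localizes_crossing hyz (hwin.of_le hxy)).mono le_rfl
      (F' := avoiding (avoiding F A) A')
      (fun l hl => ⟨(hF l hl.1.1).1, hAy l hl.1, hout l ⟨(hF l hl.1.1).1, hl.2⟩⟩)
      (offBranches_subset_offBranches hxy)
    exact (hcross.of_avoiding hA').of_avoiding hA
  · have htouch : ∀ l ∈ avoiding F A', R.Touches l b := fun l hl => by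
      obtain ⟨hlong, hlx⟩ := hF l hl.1
      obtain ⟨v, hv, hvb⟩ := hb l ⟨hlong, hl.2⟩
      exact touches_of_mem_inside hlong.1 hlx.two_le_length hv hvb
    have hbz : ¬ b ≤ z := fun hbz =>
      hyb.lt.not_ge (hmax ⟨hxy.trans hyb.le, hbz, A', hA', htouch⟩ hyb.le)
    exact ⟨A', by omega, Or.inr ⟨b, ⟨y, hxy, hyz, hyb, hbz⟩, htouch⟩⟩

end Main

end RootedTreeRep

end RootedTreeRep

lemma eq_of_isAcyclic_of_isPath {V : Type*} {G : SimpleGraph V} (hG : G.IsAcyclic) {u v : V}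
    {p q : G.Walk u v} (hp : p.IsPath) (hq : q.IsPath) : p = q :=
  congrArg Subtype.val ((hG.subsingleton_path u v).elim ⟨p, hp⟩ ⟨q, hq⟩)

lemma induce_hasse_connected {W : Type*} [PartialOrder W] [Finite W] {U : Set W}
    (hU : U.OrdConnected) {b : W} (hb : IsLeast U b) : ((hasse W).induce U).Connected := by
  have reachable w (hw : w ∈ U) : ((hasse W).induce U).Reachable ⟨b, hb.1⟩ ⟨w, hw⟩ := by
    induction w using WellFoundedLT.induction with
    | ind w ih =>
      rcases eq_or_lt_of_le (hb.2 hw) with rfl | hbw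
      · exact Reachable.refl _
      · obtain ⟨y, hby, hyw⟩ := exists_le_covBy_of_lt hbw
        have hy : y ∈ U := hU.out hb.1 hw ⟨hby, hyw.le⟩
        exact (ih y hyw.lt hy).trans (Adj.reachable (hasse_adj.2 (Or.inl hyw)))
  rw [connected_iff]
  exact ⟨fun u v => (reachable u u.2).symm.trans (reachable v v.2), ⟨⟨b, hb.1⟩⟩⟩

section Hasse

variable {W : Type*} [PartialOrder W] [IsForestOrder W] {S : Set W} {a b c s t x z : W}

lemma eq_and_covBy_of_hasse_adj (h : (hasse W).Adj a c) (hba : b ≤ a) (hbc : ¬ b ≤ c) :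
    a = b ∧ c ⋖ b := by
  rcases hasse_adj.1 h with hac | hca
  · exact absurd (hba.trans hac.le) hbc
  · obtain rfl := (eq_or_le_of_covBy hca hba).resolve_right hbc
    exact ⟨rfl, hca⟩

lemma hasse_le_of_connected {T : SimpleGraph W} (hT : T.Connected) (hle : T ≤ hasse W) :
    hasse W ≤ T := by
  have adj_of_covBy {a b : W} (hab : a ⋖ b) : T.Adj b a := by
    obtain ⟨p⟩ := hT.preconnected b a
    obtain ⟨d, -, hfst, hsnd⟩ := p.exists_boundary_dart (Set.Ici b) le_rfl hab.lt.not_ge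
    obtain ⟨hdb, hcov⟩ := eq_and_covBy_of_hasse_adj (hle d.adj) hfst hsnd
    simpa only [hdb, eq_of_covBy_of_covBy hcov hab] using d.adj
  intro a b hab
  exact (hasse_adj.1 hab).elim (fun h => (adj_of_covBy h).symm) adj_of_covBy

lemma mem_and_exists_covBy_of_induce_hasse_connected (hS : ((hasse W).induce S).Connected)
    (hs : s ∈ S) (hbs : b ≤ s) (ht : t ∈ S) (hbt : ¬ b ≤ t) : b ∈ S ∧ ∃ y ∈ S, y ⋖ b := by
  obtain ⟨p⟩ := hS.preconnected ⟨s, hs⟩ ⟨t, ht⟩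
  obtain ⟨d, -, hfst, hsnd⟩ := p.exists_boundary_dart {w | b ≤ w.1} hbs hbt
  obtain ⟨hdb, hcov⟩ := eq_and_covBy_of_hasse_adj (induce_adj.1 d.adj) hfst hsnd
  exact ⟨hdb ▸ d.fst.2, d.snd, d.snd.2, hcov⟩

lemma Icc_subset_support (q : (hasse W).Walk x z) : Set.Icc x z ⊆ {w | w ∈ q.support} := by
  rintro w ⟨hxw, hwz⟩
  rcases eq_or_lt_of_le hxw with rfl | hlt
  · exact q.start_mem_support
  · obtain ⟨d, hd, hfst, hsnd⟩ :=
      q.exists_boundary_dart (Set.Ici w)ᶜ hlt.not_ge (not_not_intro hwz)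
    obtain ⟨rfl, -⟩ := eq_and_covBy_of_hasse_adj d.adj.symm (not_not.1 hsnd) hfst
    exact q.dart_snd_mem_support_of_mem_darts hd

lemma setOf_mem_support_eq_Icc [Finite W] (hW : (hasse W).IsAcyclic) (hxz : x ≤ z)
    {q : (hasse W).Walk x z} (hq : q.IsPath) : {w | w ∈ q.support} = Set.Icc x z := by
  refine Set.Subset.antisymm ?_ (Icc_subset_support q)
  obtain ⟨p, hp⟩ := (induce_hasse_connected (U := Set.Icc x z) Set.ordConnected_Icc
    (isLeast_Icc hxz)).exists_isPath ⟨x, by simpa⟩ ⟨z, by simpa⟩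
  have hqp : q = p.map (Embedding.induce _).toHom :=
    eq_of_isAcyclic_of_isPath hW hq (hp.map Subtype.val_injective)
  intro w hw
  obtain ⟨v, -, rfl⟩ := List.mem_map.1 (Walk.support_map _ p ▸ hqp ▸ hw)
  exact v.2

end Hasse

section RootedOrder

variable {W : Type} {T : SimpleGraph W} {r x y w : W}

lemma mem_rootedSubtree_iff_mem_support (hT : T.IsAcyclic) {p : T.Walk r w} (hp : p.IsPath) :
    w ∈ rootedSubtree T r x ↔ x ∈ p.support := by
  refine ⟨fun h => h p hp, fun h q hq => ?_⟩
  obtain rfl : p = q := eq_of_isAcyclic_of_isPath hT hp hq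
  exact h

lemma mem_rootedSubtree_iff_isPrefix (hT : T.IsAcyclic) {p : T.Walk r x} (hp : p.IsPath)
    {q : T.Walk r w} (hq : q.IsPath) :
    w ∈ rootedSubtree T r x ↔ p.support <+: q.support := by
  classical
  rw [mem_rootedSubtree_iff_mem_support hT hq]
  refine ⟨fun hx => ?_, fun h => h.subset p.end_mem_support⟩
  have : p = q.takeUntil x hx :=
    eq_of_isAcyclic_of_isPath hT hp (hq.takeUntil hx)
  exact this ▸ q.support_takeUntil_prefix_support hx

/-- The order of a tree `T` rooted at `r`, in which `x` is below `w` when `w` lies in the subtree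
rooted at `x`. -/
@[reducible]
def rootedOrder (hT : T.IsTree) (r : W) : PartialOrder W where
  le x w := w ∈ rootedSubtree T r x
  le_refl _ p _ := p.end_mem_support
  le_trans x y w hxy hyw := by
    classical
    exact fun p hp => p.support_takeUntil_subset_support (hyw p hp)
      (hxy _ (hp.takeUntil (hyw p hp)))
  le_antisymm x y hxy hyx := by
    obtain ⟨p, hp⟩ := hT.connected.exists_isPath r x
    obtain ⟨q, hq⟩ := hT.connected.exists_isPath r y
    have hpq := (mem_rootedSubtree_iff_isPrefix hT.isAcyclic hp hq).1 hxy
    have hqp := (mem_rootedSubtree_iff_isPrefix hT.isAcyclic hq hp).1 hyx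
    have hlast : p.support.getLast? = q.support.getLast? :=
      congrArg List.getLast? (hpq.eq_of_length_le hqp.length_le)
    simpa [List.getLast?_eq_some_getLast] using hlast

lemma isForestOrder_rootedOrder (hT : T.IsTree) (r : W) :
    letI := rootedOrder hT r; IsForestOrder W := by
  let := rootedOrder hT r
  refine ⟨fun {x y w} hx hy => ?_⟩
  obtain ⟨p, hp⟩ := hT.connected.exists_isPath r x
  obtain ⟨q, hq⟩ := hT.connected.exists_isPath r y
  obtain ⟨s, hs⟩ := hT.connected.exists_isPath r w
  have hps := (mem_rootedSubtree_iff_isPrefix hT.isAcyclic hp hs).1 hx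
  have hqs := (mem_rootedSubtree_iff_isPrefix hT.isAcyclic hq hs).1 hy
  refine (List.prefix_or_prefix_of_prefix hps hqs).imp ?_ ?_
  · exact (mem_rootedSubtree_iff_isPrefix hT.isAcyclic hp hq).2
  · exact (mem_rootedSubtree_iff_isPrefix hT.isAcyclic hq hp).2

lemma covBy_of_adj_of_notMem_support (hT : T.IsTree) (h : T.Adj y w) {p : T.Walk r y}
    (hp : p.IsPath) (hw : w ∉ p.support) : letI := rootedOrder hT r; y ⋖ w := by
  let := rootedOrder hT r
  have hle {u : W} : u ≤ w ↔ u ≤ y ∨ u = w := by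
    change w ∈ rootedSubtree T r u ↔ y ∈ rootedSubtree T r u ∨ u = w
    rw [mem_rootedSubtree_iff_mem_support hT.isAcyclic (hp.concat hw h),
      mem_rootedSubtree_iff_mem_support hT.isAcyclic hp, Walk.support_concat]
    simp
  refine ⟨lt_of_le_of_ne (hle.2 (Or.inl le_rfl)) h.ne, fun u hyu huw => ?_⟩
  exact (hle.1 huw.le).elim hyu.not_ge huw.ne

lemma le_hasse_rootedOrder (hT : T.IsTree) (r : W) : letI := rootedOrder hT r; T ≤ hasse W := by
  let := rootedOrder hT r
  intro a b h
  rw [hasse_adj]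
  obtain ⟨p, hp⟩ := hT.connected.exists_isPath r a
  by_cases hb : b ∈ p.support
  · obtain ⟨q, hq⟩ := hT.connected.exists_isPath r b
    have hba : b ≤ a := (mem_rootedSubtree_iff_mem_support hT.isAcyclic hp).2 hb
    have ha : a ∉ q.support := fun ha =>
      h.ne (le_antisymm ((mem_rootedSubtree_iff_mem_support hT.isAcyclic hq).2 ha) hba)
    exact Or.inr (covBy_of_adj_of_notMem_support hT h.symm hq ha)
  · exact Or.inl (covBy_of_adj_of_notMem_support hT h hp hb)

theorem exists_forestOrder_eq_hasse (hT : T.IsTree) (r : W) :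
    ∃ _ : PartialOrder W, IsForestOrder W ∧ T = hasse W ∧ ∀ x, rootedSubtree T r x = Set.Ici x := by
  let := rootedOrder hT r
  have hforest := isForestOrder_rootedOrder hT r
  have hle := le_hasse_rootedOrder hT r
  exact ⟨_, hforest, le_antisymm hle (hasse_le_of_connected hT.connected hle), fun _ => rfl⟩

end RootedOrder

section Components

variable {W : Type}

lemma IsCompOf.subset_of_mem {T : SimpleGraph W} {s C D : Set W} {v : W} (hC : IsCompOf T s C)
    (hD : IsCompOf T s D) (hvC : v ∈ C) (hvD : v ∈ D) : C ⊆ D := by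
  intro w hw
  by_contra hwD
  obtain ⟨p⟩ := hC.2.2.1.preconnected ⟨v, hvC⟩ ⟨w, hw⟩
  obtain ⟨d, -, hfst, hsnd⟩ := p.exists_boundary_dart {w | w.1 ∈ D} hvD hwD
  exact hsnd (hD.2.2.2 hfst (hC.2.1 d.snd.2) (induce_adj.1 d.adj))

variable [PartialOrder W] {X' : Set W} {b u x x' z : W}

lemma mem_offBranches_of_hasse_adj (hu : u ∈ Set.Icc x z) (hux : (hasse W).Adj u x')
    (hx' : x' ∈ Set.Ici x \ Set.Icc x z) : x' ∈ offBranches x z := by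
  have hx'z : ¬ x' ≤ z := fun h => hx'.2 ⟨hx'.1, h⟩
  rcases hasse_adj.1 hux with h | h
  · exact ⟨u, hu.1, hu.2, h, hx'z⟩
  · exact absurd (h.le.trans hu.2) hx'z

variable [IsForestOrder W] [Finite W]

lemma isCompOf_Ici_of_mem_offBranches (hb : b ∈ offBranches x z) :
    IsCompOf (hasse W) (Set.Ici x \ Set.Icc x z) (Set.Ici b) := by
  have hxb := (lt_of_mem_offBranches hb).le
  obtain ⟨y, hxy, hyz, hyb, hbz⟩ := hb
  refine ⟨⟨b, le_rfl⟩, fun w hw => ⟨hxb.trans hw, fun hwz => hbz (hw.trans hwz.2)⟩,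
    induce_hasse_connected Set.ordConnected_Ici isLeast_Ici, fun a c ha hc hac => ?_⟩
  by_contra hbc
  obtain ⟨rfl, hca⟩ := eq_and_covBy_of_hasse_adj hac ha hbc
  obtain rfl := eq_of_covBy_of_covBy hyb hca
  exact hc.2 ⟨hxy, hyz⟩

lemma IsCompOf.eq_Ici (hX' : IsCompOf (hasse W) (Set.Ici x \ Set.Icc x z) X')
    (hx' : x' ∈ offBranches x z) (hx'X' : x' ∈ X') : X' = Set.Ici x' :=
  have hIci := isCompOf_Ici_of_mem_offBranches hx'
  Set.Subset.antisymm (hX'.subset_of_mem hIci hx'X' Set.self_mem_Ici)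
    (hIci.subset_of_mem hX' Set.self_mem_Ici hx'X')

end Components

section CutterChooser

variable {W : Type} [PartialOrder W] [IsForestOrder W] [Finite W] {x : W} {n t : ℕ}

lemma CutterWinsAbove.of_cutterWins (hW : (hasse W).IsAcyclic)
    (h : cutterWins (hasse W) t (Set.Ici x) x) : CutterWinsAbove t x := by
  induction t generalizing x with
  | zero => exact h
  | succ t ih =>
    obtain ⟨z, hxz, p, hp, -, h⟩ := h
    rw [setOf_mem_support_eq_Icc hW hxz hp] at h
    refine ⟨z, hxz, fun b hb => ?_⟩
    have hcomp := isCompOf_Ici_of_mem_offBranches hb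
    rcases h with h | h
    · exact absurd (hcomp.2.1 Set.self_mem_Ici) (by rw [← h]; simp)
    · obtain ⟨y, hxy, hyz, hyb, -⟩ := hb
      exact ih (h _ b hcomp Set.self_mem_Ici
        ⟨y, Icc_subset_support p ⟨hxy, hyz⟩, hasse_adj.2 (Or.inl hyb)⟩)

lemma cutterWins_of_ncard_Ici_le (h : (Set.Ici x).ncard ≤ n) :
    cutterWins (hasse W) n (Set.Ici x) x := by
  induction n generalizing x with
  | zero => exact absurd ((Set.ncard_eq_zero).1 (Nat.le_zero.1 h)) Set.nonempty_Ici.ne_empty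
  | succ n ih =>
    refine ⟨x, le_rfl, Walk.nil, Walk.IsPath.nil, by simp, Or.inr ?_⟩
    rintro X' x' hX' hx' ⟨u, hu, hux'⟩
    have hsupp : {w | w ∈ (Walk.nil : (hasse W).Walk x x).support} = Set.Icc x x := by simp
    rw [hsupp] at hX'
    have hbranch := mem_offBranches_of_hasse_adj (hsupp ▸ hu) hux' (hX'.2.1 hx')
    rw [hX'.eq_Ici hbranch hx']
    have := Set.ncard_lt_ncard (Set.Ici_ssubset_Ici.2 (lt_of_mem_offBranches hbranch))
    exact ih (by omega)

lemma cutterWinsAbove_ccgOn (hW : (hasse W).IsAcyclic) (x : W) :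
    CutterWinsAbove (ccgOn (hasse W) (Set.Ici x) x) x :=
  .of_cutterWins hW (Nat.sInf_mem (s := {t | cutterWins (hasse W) t (Set.Ici x) x})
    ⟨_, cutterWins_of_ncard_Ici_le le_rfl⟩)

end CutterChooser

section WalkToList

variable {V W : Type} {G : SimpleGraph V} {a b : V} {p : G.Walk a b}

lemma IsLongestPath.isLongestPathList_support (hp : IsLongestPath G p) :
    IsLongestPathList G p.support := by
  refine ⟨isPathList_support hp.1, fun l hl => ?_⟩
  rcases eq_or_ne l [] with rfl | hne
  · simp
  · have hlen := hp.2 _ _ (Walk.ofSupport l hne hl.1)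
      (by rw [Walk.isPath_def, Walk.support_ofSupport]; exact hl.2)
    have hl := congrArg List.length (Walk.support_ofSupport hne hl.1)
    rw [Walk.length_support] at hl ⊢
    omega

variable [PartialOrder W] [IsForestOrder W]

/-- The representation on the tree order underlying a tree representation whose host tree is a
Hasse diagram. -/
def TreeRep.toRootedTreeRep (R : TreeRep G (hasse W)) : RootedTreeRep W G where
  S := R.S
  nonempty v := Set.nonempty_coe_sort.1 (R.subtree_connected v).nonempty
  adj_iff := R.adj_iff
  sep v _ _ _ := mem_and_exists_covBy_of_induce_hasse_connected (R.subtree_connected v)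

lemma TreeRep.listCore_support (R : TreeRep G (hasse W)) (p : G.Walk a b) :
    R.toRootedTreeRep.listCore p.support = R.core p.toSubgraph := by
  simp only [RootedTreeRep.listCore, AreConsecutive, Walk.infix_support_iff_mem_edges,
    TreeRep.core, Walk.adj_toSubgraph_iff_mem_edges, toRootedTreeRep]

end WalkToList

theorem allpaths_general {V W : Type} [Finite V] [Finite W] (G : SimpleGraph V)
    (T : SimpleGraph W) (hconn : G.Connected) (R : TreeRep G T) (r x z : W)
    (hz : z ∈ rootedSubtree T r x) (q : T.Walk x z) (hq : q.IsPath)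
    {ι : Type*} (a b : ι → V) (P : ∀ i : ι, G.Walk (a i) (b i))
    (hP : ∀ i : ι, IsLongestPath G (P i))
    (hcap : ∀ i : ι, (R.core (P i).toSubgraph ∩ rootedSubtree T r x).Nonempty) :
    ∃ A : Set V, A.Finite ∧ A.ncard ≤ 4 * ccgOn T (rootedSubtree T r x) x + 4 ∧
      ((∀ i : ι, ∃ v ∈ A, v ∈ (P i).support) ∨
        ∃ X' : Set W, IsCompOf T (rootedSubtree T r x \ {w : W | w ∈ q.support}) X' ∧
          ∀ i : ι, (∀ v ∈ A, v ∉ (P i).support) →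
            (R.core (P i).toSubgraph ∩ X').Nonempty) := by
  obtain ⟨_, _, rfl, hIci⟩ := exists_forestOrder_eq_hasse R.isTree r
  simp only [hIci, ← R.listCore_support] at hz hcap ⊢
  rw [setOf_mem_support_eq_Icc R.isTree.isAcyclic hz hq]
  obtain ⟨A, hA, hloc⟩ := R.toRootedTreeRep.localizes_of_touches hconn hz
    (cutterWinsAbove_ccgOn R.isTree.isAcyclic x) (F := Set.range fun i => (P i).support)
    (Set.forall_mem_range.2 fun i => ⟨(hP i).isLongestPathList_support, hcap i⟩)
  refine ⟨A, Set.toFinite A, hA, hloc.imp (fun hempty i => ?_) ?_⟩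
  · by_contra! hi
    exact hempty.subset ⟨⟨i, rfl⟩, hi⟩
  · rintro ⟨b', hb', htouch⟩
    exact ⟨Set.Ici b', isCompOf_Ici_of_mem_offBranches hb',
      fun i hi => htouch _ ⟨⟨i, rfl⟩, hi⟩⟩

/-- For a connected chordal `G` with minimal rooted tree representation,
a subtree `X` rooted at `x`, the `x`–`z` path `Q = q` in `X`, and a family `𝒫 = P` of
longest paths with the core capture property for `X`, there is `A ⊆ V(G)` with
`|A| ≤ 4 · ccg(X, x) + 5` such that the paths of `𝒫` disjoint from `A` either form an
empty family, or some component `X'` of `X − V(Q)` has the core capture property for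
them. -/
theorem allpaths {V W : Type} [Fintype V] [Fintype W] (G : SimpleGraph V)
    (T : SimpleGraph W) (hconn : G.Connected) (hchordal : IsChordal G)
    (R : TreeRep G T) (hmin : R.IsMinimal) (r : W)
    (x z : W) (hz : z ∈ rootedSubtree T r x)
    (q : T.Walk x z) (hq : q.IsPath) (hqX : ∀ w ∈ q.support, w ∈ rootedSubtree T r x)
    {ι : Type} (a b : ι → V) (P : ∀ i : ι, G.Walk (a i) (b i))
    (hP : ∀ i : ι, IsLongestPath G (P i))
    (hcap : ∀ i : ι, (R.core (P i).toSubgraph ∩ rootedSubtree T r x).Nonempty) :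
    ∃ A : Set V, A.Finite ∧ A.ncard ≤ 4 * ccgOn T (rootedSubtree T r x) x + 5 ∧
      ((∀ i : ι, ∃ v ∈ A, v ∈ (P i).support) ∨
        ∃ X' : Set W, IsCompOf T (rootedSubtree T r x \ {w : W | w ∈ q.support}) X' ∧
          ∀ i : ι, (∀ v ∈ A, v ∉ (P i).support) →
            (R.core (P i).toSubgraph ∩ X').Nonempty) := by
  obtain ⟨A, hfin, hA, h⟩ := allpaths_general G T hconn R r x z hz q hq a b P hP hcap
  exact ⟨A, hfin, by omega, h⟩
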